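/- arXiv:1402.6537 — 2 statements merged into one kernel-verified Lean document; each statement's English description precedes it below -/
import Mathlib

section
/- Define α_Δt(q,q') = V(q') − V(q) + (1/(4Δt))(|q − q' + Δt∇V(q')|² − |q' − q + Δt∇V(q)|²), so that R_Δt(q,q') = min(1, e^{−α_Δt(q,q')}). Then there exist C ≥ 0 and Δt* > 0 such that for all 0 < Δt ≤ Δt*, all q ∈ ℝⁿ and all G ∈ ℝⁿ, |α_Δt(q, q − Δt∇V(q) + √(2Δt)G) − Δt^{3/2} ξ(q,G)| ≤ C Δt² (1 + |G|⁶). -/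
/-!
For `h = q' - q`, expanding the squares gives
`α(q, q + h) = V(q + h) - V(q) - ½ (DV(q) h + DV(q + h) h) + (Δt/4) (|∇V(q + h)|² - |∇V(q)|²)`.
The first part is the error of the trapezoidal rule along the segment from `q` to `q + h`, that is
`-D³V(q)(h, h, h)/12 + O(|h|⁴)`; the second part is `(Δt/2) ⟪∇V(q), ∇²V(q) h⟫ + O(Δt |h|²)`.
At `h = √(2Δt) G` the sum of the two leading terms is exactly `Δt^{3/2} ξ(q, G)`, and the drift
`-Δt ∇V(q)`, which is of higher order in `Δt`, changes it by `O(Δt²)` only. The remainders involve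
just bounds on the derivatives of `V` of orders `1` to `4`, which periodicity provides.
-/

open MeasureTheory RealInnerProductSpace

noncomputable section

abbrev En (n : ℕ) := EuclideanSpace ℝ (Fin n)

/-- Gaussian proposal density of the Euler–Maruyama scheme. -/
def Tker {n : ℕ} (V : En n → ℝ) (dt : ℝ) (q q' : En n) : ℝ :=
  (4 * Real.pi * dt) ^ (-(n : ℝ) / 2) *
    Real.exp (-‖q' - q + dt • gradient V q‖ ^ 2 / (4 * dt))

/-- Metropolis acceptance probability. -/
def Rk {n : ℕ} (V : En n → ℝ) (dt : ℝ) (q q' : En n) : ℝ :=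
  min 1 (Real.exp (-V q') * Tker V dt q' q / (Real.exp (-V q) * Tker V dt q q'))

/-- proposal move -/
def propMove {n : ℕ} (V : En n → ℝ) (dt : ℝ) (q g : En n) : En n :=
  q - dt • gradient V q + Real.sqrt (2 * dt) • g

def xi {n : ℕ} (V : En n → ℝ) (q g : En n) : ℝ :=
  -(Real.sqrt 2 / 6) * iteratedFDeriv ℝ 3 V q (fun _ => g) +
    (Real.sqrt 2 / 2) * ⟪gradient V q, fderiv ℝ (gradient V) q g⟫

def xiPlus {n : ℕ} (V : En n → ℝ) (q g : En n) : ℝ := max (xi V q g) 0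

/-- standard Gaussian measure on ℝⁿ -/
def gauss (n : ℕ) : Measure (En n) :=
  volume.withDensity fun g =>
    ENNReal.ofReal ((2 * Real.pi) ^ (-(n : ℝ) / 2) * Real.exp (-‖g‖ ^ 2 / 2))

/-- fundamental domain of the torus -/
def Box (n : ℕ) (L : ℝ) : Set (En n) := {q | ∀ i, q i ∈ Set.Ico (0 : ℝ) L}

/-- integral with respect to the Gibbs measure μ on the torus M -/
def muInt {n : ℕ} (V : En n → ℝ) (L : ℝ) (f : En n → ℝ) : ℝ :=
  (∫ q in Box n L, Real.exp (-V q))⁻¹ * ∫ q in Box n L, f q * Real.exp (-V q)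

/-- Laplacian -/
def lap {n : ℕ} (ψ : En n → ℝ) (q : En n) : ℝ :=
  ∑ i, iteratedFDeriv ℝ 2 ψ q (fun _ => EuclideanSpace.single i (1 : ℝ))

/-- generator of the overdamped Langevin dynamics -/
def gen {n : ℕ} (V ψ : En n → ℝ) (q : En n) : ℝ :=
  -⟪gradient V q, gradient ψ q⟫ + lap ψ q

/-- MALA transition operator on periodic functions -/
def Pmala {n : ℕ} (V : En n → ℝ) (dt : ℝ) (f : En n → ℝ) (q : En n) : ℝ :=
  f q + ∫ q', Rk V dt q q' * Tker V dt q q' * (f q' - f q)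

/-- the operator D₁ -/
def D1op {n : ℕ} (V ψ : En n → ℝ) (q : En n) : ℝ :=
  2 * ∑ i, ∑ j, (iteratedFDeriv ℝ 2 V q ![EuclideanSpace.single i (1:ℝ), EuclideanSpace.single j (1:ℝ)]) *
      (iteratedFDeriv ℝ 2 ψ q ![EuclideanSpace.single i (1:ℝ), EuclideanSpace.single j (1:ℝ)])
    + ⟪gradient (fun x => lap V x) q, gradient ψ q⟫
    - ⟪gradient V q, fderiv ℝ (gradient V) q (gradient ψ q)⟫

/-- the operator D₂ -/
def D2op {n : ℕ} (V ψ : En n → ℝ) (q : En n) : ℝ :=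
  -Real.sqrt 2 * ⟪∫ g, xiPlus V q g • g ∂(gauss n), gradient ψ q⟫

/-- the operator A appearing in the expansion of the MALA evolution operator -/
def Aop {n : ℕ} (V ψ : En n → ℝ) (q : En n) : ℝ :=
  (gen V (gen V ψ) q + D1op V ψ q + D2op V ψ q) / 2

/-- Metropolized increment -/
def deltaInc {n : ℕ} (V : En n → ℝ) (dt : ℝ) (q g : En n) (u : ℝ) : En n :=
  if u ≤ Rk V dt q (propMove V dt q g) then (-dt) • gradient V q + Real.sqrt (2 * dt) • g
  else 0

/-- expectation over G (std Gaussian) and U (uniform on [0,1]) of the increment -/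
def EguDelta {n : ℕ} (V : En n → ℝ) (dt : ℝ) (q : En n) : En n :=
  ∫ g, (∫ u in Set.Icc (0 : ℝ) 1, deltaInc V dt q g u) ∂(gauss n)


def alphaMH {n : ℕ} (V : En n → ℝ) (dt : ℝ) (q q' : En n) : ℝ :=
  V q' - V q + (1 / (4 * dt)) *
    (‖q - q' + dt • gradient V q'‖ ^ 2 - ‖q' - q + dt • gradient V q‖ ^ 2)

section Periodic

variable {E F : Type*} [NormedAddCommGroup E] [NormedSpace ℝ E] [NormedAddCommGroup F]

lemma exists_norm_le_of_periodic_basis {ι : Type*} [Finite ι] (b : Module.Basis ι ℝ E)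
    {f : E → F} (hf : Continuous f) (hper : ∀ i, Function.Periodic f (b i)) :
    ∃ K, ∀ x, ‖f x‖ ≤ K := by
  cases nonempty_fintype ι
  have : FiniteDimensional ℝ E := b.finiteDimensional_of_finite
  have : ProperSpace E := FiniteDimensional.proper ℝ E
  have hspan : ∀ v ∈ Submodule.span ℤ (Set.range b), Function.Periodic f v := fun v hv => by
    induction hv using Submodule.span_induction with
    | mem v hv => obtain ⟨i, rfl⟩ := hv; exact hper i
    | zero => exact fun x => by rw [add_zero]
    | add v w _ _ hv hw => exact hv.add_period hw
    | smul m v _ hv => exact hv.zsmul m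
  obtain ⟨K, hK⟩ := (isCompact_closedBall (0 : E) (∑ i, ‖b i‖)).exists_bound_of_continuousOn
    hf.continuousOn
  refine ⟨K, fun x => ?_⟩
  rw [← (hspan _ (ZSpan.floor b x).2).sub_eq x, ← ZSpan.fract_apply]
  exact hK _ (mem_closedBall_zero_iff.2 (ZSpan.norm_fract_le b x))

lemma periodic_iteratedFDeriv [NormedSpace ℝ F] {f : E → F} {c : E} (hf : Function.Periodic f c)
    (k : ℕ) : Function.Periodic (iteratedFDeriv ℝ k f) c := fun x => by
  rw [← iteratedFDeriv_comp_add_right, funext hf]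

lemma exists_norm_iteratedFDeriv_le_of_periodic_basis [NormedSpace ℝ F] {ι : Type*} [Finite ι]
    (b : Module.Basis ι ℝ E) {N : ℕ} {f : E → F} (hf : ContDiff ℝ N f)
    (hper : ∀ i, Function.Periodic f (b i)) :
    ∃ K, ∀ k ≤ N, ∀ x, ‖iteratedFDeriv ℝ k f x‖ ≤ K := by
  choose! B hB using fun k (hk : k ≤ N) => exists_norm_le_of_periodic_basis b
    (hf.continuous_iteratedFDeriv (by exact_mod_cast hk))
    (fun i => periodic_iteratedFDeriv (hper i) k)
  obtain ⟨K, hK⟩ := ((Set.finite_Iic N).image B).bddAbove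
  exact ⟨K, fun k hk x => (hB k hk x).trans (hK (Set.mem_image_of_mem B hk))⟩

lemma exists_norm_iteratedFDeriv_le_of_periodic_single [NormedSpace ℝ F] {ι : Type*} [Fintype ι]
    [DecidableEq ι] {L : ℝ} (hL : L ≠ 0) {N : ℕ} {f : EuclideanSpace ℝ ι → F} (hf : ContDiff ℝ N f)
    (hper : ∀ i, Function.Periodic f (L • EuclideanSpace.single i (1 : ℝ))) :
    ∃ K, ∀ k ≤ N, ∀ x, ‖iteratedFDeriv ℝ k f x‖ ≤ K := by
  refine exists_norm_iteratedFDeriv_le_of_periodic_basis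
    ((EuclideanSpace.basisFun ι ℝ).toBasis.isUnitSMul fun _ => hL.isUnit) hf fun i => ?_
  rw [Module.Basis.isUnitSMul_apply, OrthonormalBasis.coe_toBasis, EuclideanSpace.basisFun_apply]
  exact hper i

end Periodic

section Taylor

open scoped Nat

variable {E F : Type*} [NormedAddCommGroup E] [NormedSpace ℝ E]
  [NormedAddCommGroup F] [NormedSpace ℝ F] {f : E → F} {M : ℝ}

lemma iteratedFDeriv_fderiv_apply_const (k : ℕ) (x h : E) :
    iteratedFDeriv ℝ k (fderiv ℝ f) x (fun _ => h) h =
      iteratedFDeriv ℝ (k + 1) f x (fun _ => h) :=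
  (iteratedFDeriv_succ_apply_right (fun _ => h)).symm

variable [CompleteSpace F]

lemma norm_map_add_sub_taylor_le {n : ℕ} (hf : ContDiff ℝ (n + 1) f)
    (hM : ∀ x, ‖iteratedFDeriv ℝ (n + 1) f x‖ ≤ M) (x h : E) :
    ‖f (x + h) - ∑ k ∈ Finset.range (n + 1), (k ! : ℝ)⁻¹ • iteratedFDeriv ℝ k f x (fun _ => h)‖ ≤
      M * ‖h‖ ^ (n + 1) / (n + 1)! := by
  have hint : ∫ t in (0 : ℝ)..1, (1 - t) ^ n * (M * ‖h‖ ^ (n + 1)) =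
      M * ‖h‖ ^ (n + 1) / (n + 1) := by
    rw [intervalIntegral.integral_mul_const,
      intervalIntegral.integral_comp_sub_left (fun t : ℝ => t ^ n), integral_pow]
    simp only [sub_self, sub_zero, one_pow, zero_pow n.succ_ne_zero]
    ring
  have hrem : ‖∫ t in (0 : ℝ)..1, (1 - t) ^ n • iteratedFDeriv ℝ (n + 1) f (x + t • h)
      (fun _ => h)‖ ≤ M * ‖h‖ ^ (n + 1) / (n + 1) := by
    rw [← hint]
    refine intervalIntegral.norm_integral_le_of_norm_le zero_le_one (.of_forall fun t ht => ?_)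
      (Continuous.intervalIntegrable (by fun_prop) 0 1)
    have ht' : 0 ≤ 1 - t := sub_nonneg.2 ht.2
    rw [norm_smul, norm_pow, Real.norm_of_nonneg ht']
    gcongr
    simpa using (iteratedFDeriv ℝ (n + 1) f (x + t • h)).le_of_opNorm_le (hM _) (fun _ => h)
  rw [map_add_eq_sum_add_integral_iteratedFDeriv fun t _ => hf.contDiffAt, add_sub_cancel_left,
    norm_smul, norm_inv, Real.norm_natCast]
  calc (n ! : ℝ)⁻¹ * _ ≤ (n ! : ℝ)⁻¹ * (M * ‖h‖ ^ (n + 1) / (n + 1)) := by gcongr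
    _ = M * ‖h‖ ^ (n + 1) / (n + 1)! := by
      rw [Nat.factorial_succ, Nat.cast_mul, Nat.cast_succ]
      field_simp

lemma norm_map_add_sub_le (hf : ContDiff ℝ 1 f) (hM : ∀ x, ‖iteratedFDeriv ℝ 1 f x‖ ≤ M)
    (x h : E) : ‖f (x + h) - f x‖ ≤ M * ‖h‖ := by
  simpa using norm_map_add_sub_taylor_le (n := 0) (by simpa using hf) hM x h

lemma norm_map_add_sub_fderiv_le (hf : ContDiff ℝ 2 f) (hM : ∀ x, ‖iteratedFDeriv ℝ 2 f x‖ ≤ M)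
    (x h : E) : ‖f (x + h) - f x - fderiv ℝ f x h‖ ≤ M * ‖h‖ ^ 2 / 2 := by
  simpa [Finset.sum_range_succ, sub_sub] using
    norm_map_add_sub_taylor_le (n := 1) (by norm_num; exact hf) hM x h

lemma norm_fderiv_map_add_sub_taylor_le {n : ℕ} (hf : ContDiff ℝ (n + 2) f)
    (hM : ∀ x, ‖iteratedFDeriv ℝ (n + 2) f x‖ ≤ M) (x h : E) :
    ‖fderiv ℝ f (x + h) h -
        ∑ k ∈ Finset.range (n + 1), (k ! : ℝ)⁻¹ • iteratedFDeriv ℝ (k + 1) f x (fun _ => h)‖ ≤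
      M * ‖h‖ ^ (n + 2) / (n + 1)! := by
  have htaylor := norm_map_add_sub_taylor_le (n := n) (f := fderiv ℝ f)
    (hf.fderiv_right (by rw [add_assoc, one_add_one_eq_two]))
    (fun z => norm_iteratedFDeriv_fderiv.trans_le (hM z)) x h
  calc _ = ‖(fderiv ℝ f (x + h) - ∑ k ∈ Finset.range (n + 1),
        (k ! : ℝ)⁻¹ • iteratedFDeriv ℝ k (fderiv ℝ f) x (fun _ => h)) h‖ := by
        simp [iteratedFDeriv_fderiv_apply_const]
    _ ≤ M * ‖h‖ ^ (n + 1) / (n + 1)! * ‖h‖ := ContinuousLinearMap.le_of_opNorm_le _ htaylor h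
    _ = M * ‖h‖ ^ (n + 2) / (n + 1)! := by ring

lemma norm_trapezoidal_error_add_le (hf : ContDiff ℝ 4 f)
    (hM : ∀ x, ‖iteratedFDeriv ℝ 4 f x‖ ≤ M) (x h : E) :
    ‖f (x + h) - f x - (1 / 2 : ℝ) • (fderiv ℝ f x h + fderiv ℝ f (x + h) h) +
      (1 / 12 : ℝ) • iteratedFDeriv ℝ 3 f x (fun _ => h)‖ ≤ M * ‖h‖ ^ 4 / 8 := by
  have hval := norm_map_add_sub_taylor_le (n := 3) (by norm_num; exact hf) hM x h
  have hderiv := norm_fderiv_map_add_sub_taylor_le (n := 2) (by norm_num; exact hf) hM x h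
  set p := ∑ k ∈ Finset.range 4, (k ! : ℝ)⁻¹ • iteratedFDeriv ℝ k f x (fun _ => h) with hp
  set p' := ∑ k ∈ Finset.range 3, (k ! : ℝ)⁻¹ • iteratedFDeriv ℝ (k + 1) f x (fun _ => h) with hp'
  have hsplit : f (x + h) - f x - (1 / 2 : ℝ) • (fderiv ℝ f x h + fderiv ℝ f (x + h) h) +
      (1 / 12 : ℝ) • iteratedFDeriv ℝ 3 f x (fun _ => h) =
      (f (x + h) - p) - (1 / 2 : ℝ) • (fderiv ℝ f (x + h) h - p') := by
    simp only [hp, hp', Finset.sum_range_succ, Finset.sum_range_zero, Nat.factorial, Nat.reduceAdd,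
      Nat.reduceMul, Nat.succ_eq_add_one, Nat.cast_one, Nat.cast_ofNat, inv_one, one_smul, zero_add,
      iteratedFDeriv_zero_apply, iteratedFDeriv_one_apply]
    module
  rw [hsplit]
  calc _
    _ ≤ M * ‖h‖ ^ 4 / 4! + (1 / 2) * (M * ‖h‖ ^ 4 / 3!) := by
        refine norm_sub_le_of_le hval ?_
        rw [norm_smul, Real.norm_of_nonneg one_half_pos.le]
        gcongr
    _ = M * ‖h‖ ^ 4 / 8 := by
        simp only [Nat.factorial]
        ring

end Taylor

section InnerProduct

variable {E F : Type*} [NormedAddCommGroup E] [NormedSpace ℝ E]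
  [NormedAddCommGroup F] [InnerProductSpace ℝ F] [CompleteSpace F] {f : E → F} {M₁ M₂ : ℝ}

lemma abs_norm_sq_map_add_sub_le (hf : ContDiff ℝ 2 f)
    (hM₁ : ∀ x, ‖iteratedFDeriv ℝ 1 f x‖ ≤ M₁) (hM₂ : ∀ x, ‖iteratedFDeriv ℝ 2 f x‖ ≤ M₂)
    (x h : E) :
    |‖f (x + h)‖ ^ 2 - ‖f x‖ ^ 2 - 2 * ⟪f x, fderiv ℝ f x h⟫| ≤
      (M₁ ^ 2 + ‖f x‖ * M₂) * ‖h‖ ^ 2 := by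
  have hid : ‖f (x + h)‖ ^ 2 - ‖f x‖ ^ 2 - 2 * ⟪f x, fderiv ℝ f x h⟫ =
      ‖f (x + h) - f x‖ ^ 2 + 2 * ⟪f x, f (x + h) - f x - fderiv ℝ f x h⟫ := by
    rw [norm_sub_sq_real, inner_sub_right, inner_sub_right, real_inner_self_eq_norm_sq,
      real_inner_comm (f x) (f (x + h))]
    ring
  have hsq : ‖f (x + h) - f x‖ ^ 2 ≤ (M₁ * ‖h‖) ^ 2 := by
    gcongr
    exact norm_map_add_sub_le (hf.of_le one_le_two) hM₁ x h
  have hinner : |⟪f x, f (x + h) - f x - fderiv ℝ f x h⟫| ≤ ‖f x‖ * (M₂ * ‖h‖ ^ 2 / 2) :=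
    (abs_real_inner_le_norm _ _).trans
      (by gcongr; exact norm_map_add_sub_fderiv_le hf hM₂ x h)
  rw [hid]
  calc _ ≤ |‖f (x + h) - f x‖ ^ 2| + |2 * ⟪f x, f (x + h) - f x - fderiv ℝ f x h⟫| :=
        abs_add_le _ _
    _ ≤ (M₁ * ‖h‖) ^ 2 + 2 * (‖f x‖ * (M₂ * ‖h‖ ^ 2 / 2)) := by
        rw [abs_of_nonneg (sq_nonneg _), abs_mul, abs_two]
        gcongr
    _ = (M₁ ^ 2 + ‖f x‖ * M₂) * ‖h‖ ^ 2 := by ring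

end InnerProduct

section Gradient

variable {E : Type*} [NormedAddCommGroup E] [InnerProductSpace ℝ E] [CompleteSpace E] {V : E → ℝ}

lemma contDiff_gradient {m n : WithTop ℕ∞} (hV : ContDiff ℝ n V) (hmn : m + 1 ≤ n) :
    ContDiff ℝ m (gradient V) :=
  (InnerProductSpace.toDual ℝ E).symm.toContinuousLinearEquiv.contDiff.comp (hV.fderiv_right hmn)

lemma norm_iteratedFDeriv_gradient (k : ℕ) (x : E) :
    ‖iteratedFDeriv ℝ k (gradient V) x‖ = ‖iteratedFDeriv ℝ (k + 1) V x‖ := by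
  rw [← norm_iteratedFDeriv_fderiv]
  exact (InnerProductSpace.toDual ℝ E).symm.norm_iteratedFDeriv_comp_left _ x k

lemma norm_gradient_le {M : ℝ} {x : E} (hM : ‖iteratedFDeriv ℝ 1 V x‖ ≤ M) :
    ‖gradient V x‖ ≤ M := by
  rwa [← norm_iteratedFDeriv_zero (𝕜 := ℝ), norm_iteratedFDeriv_gradient]

end Gradient

section MetropolisHastings

variable {n : ℕ} {V : En n → ℝ} {K dt : ℝ}

lemma alphaMH_add_eq (V : En n → ℝ) (hdt : dt ≠ 0) (q h : En n) :
    alphaMH V dt q (q + h) = V (q + h) - V q - 1 / 2 * (fderiv ℝ V q h + fderiv ℝ V (q + h) h) +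
      dt / 4 * (‖gradient V (q + h)‖ ^ 2 - ‖gradient V q‖ ^ 2) := by
  rw [← inner_gradient_left, ← inner_gradient_left, alphaMH,
    show q - (q + h) + dt • gradient V (q + h) = dt • gradient V (q + h) - h by abel,
    show q + h - q + dt • gradient V q = dt • gradient V q + h by abel,
    norm_sub_sq_real, norm_add_sq_real, norm_smul, norm_smul, mul_pow, mul_pow, Real.norm_eq_abs,
    sq_abs, real_inner_smul_left, real_inner_smul_left]
  field_simp
  ring

/-- The leading part of `h ↦ alphaMH V dt q (q + h)` for small `h` and `dt`: the leading term of the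
error of the trapezoidal rule for `V` plus `dt / 4` times the differential of `|∇V|²`. -/
def alphaLead (V : En n → ℝ) (dt : ℝ) (q h : En n) : ℝ :=
  dt / 2 * ⟪gradient V q, fderiv ℝ (gradient V) q h⟫ -
    1 / 12 * iteratedFDeriv ℝ 3 V q (fun _ => h)

lemma alphaLead_sqrt_smul (V : En n → ℝ) (hdt : 0 < dt) (q g : En n) :
    alphaLead V dt q (√(2 * dt) • g) = dt ^ ((3 : ℝ) / 2) * xi V q g := by
  have hpow : dt ^ ((3 : ℝ) / 2) = dt * √dt := by
    rw [show (3 : ℝ) / 2 = 1 + 1 / 2 by norm_num, Real.rpow_add hdt, Real.rpow_one,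
      Real.sqrt_eq_rpow]
  have hsqrt : √(2 * dt) = √2 * √dt := Real.sqrt_mul zero_le_two dt
  have hcube : √(2 * dt) ^ 3 = 2 * dt * (√2 * √dt) := by
    rw [pow_succ, Real.sq_sqrt (by positivity), hsqrt]
  have htri : iteratedFDeriv ℝ 3 V q (fun _ => √(2 * dt) • g) =
      √(2 * dt) ^ 3 * iteratedFDeriv ℝ 3 V q (fun _ => g) := by
    simpa using (iteratedFDeriv ℝ 3 V q).map_smul_univ (fun _ => √(2 * dt)) (fun _ => g)
  rw [alphaLead, xi, htri, hcube, hpow, map_smul, real_inner_smul_right, hsqrt]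
  ring

lemma abs_alphaMH_add_sub_alphaLead_le (hV : ContDiff ℝ 4 V)
    (hK : ∀ k ∈ Finset.Icc 1 4, ∀ x, ‖iteratedFDeriv ℝ k V x‖ ≤ K) (hdt : 0 < dt) (q h : En n) :
    |alphaMH V dt q (q + h) - alphaLead V dt q h| ≤
      K * ‖h‖ ^ 4 / 8 + dt / 2 * (K ^ 2 * ‖h‖ ^ 2) := by
  have hgrad : ‖gradient V q‖ ≤ K := norm_gradient_le (hK 1 (by simp) q)
  have htrap := norm_trapezoidal_error_add_le hV (hK 4 (by simp)) q h
  have hnormSq := abs_norm_sq_map_add_sub_le (contDiff_gradient hV (m := 2) (by norm_num))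
    (fun x => (norm_iteratedFDeriv_gradient 1 x).trans_le (hK 2 (by simp) x))
    (fun x => (norm_iteratedFDeriv_gradient 2 x).trans_le (hK 3 (by simp) x)) q h
  have hsplit : alphaMH V dt q (q + h) - alphaLead V dt q h =
      (V (q + h) - V q - (1 / 2 : ℝ) • (fderiv ℝ V q h + fderiv ℝ V (q + h) h) +
        (1 / 12 : ℝ) • iteratedFDeriv ℝ 3 V q (fun _ => h)) +
      dt / 4 * (‖gradient V (q + h)‖ ^ 2 - ‖gradient V q‖ ^ 2 -
        2 * ⟪gradient V q, fderiv ℝ (gradient V) q h⟫) := by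
    rw [alphaMH_add_eq V hdt.ne', alphaLead, smul_eq_mul, smul_eq_mul]
    ring
  have hK0 : 0 ≤ K := (norm_nonneg _).trans hgrad
  rw [hsplit]
  calc _ ≤ K * ‖h‖ ^ 4 / 8 + dt / 4 * ((K ^ 2 + ‖gradient V q‖ * K) * ‖h‖ ^ 2) := by
        refine (abs_add_le _ _).trans (add_le_add htrap ?_)
        rw [abs_mul, abs_of_pos (by positivity)]
        gcongr
    _ ≤ K * ‖h‖ ^ 4 / 8 + dt / 4 * ((K ^ 2 + K * K) * ‖h‖ ^ 2) := by gcongr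
    _ = K * ‖h‖ ^ 4 / 8 + dt / 2 * (K ^ 2 * ‖h‖ ^ 2) := by ring

lemma abs_alphaLead_sub_alphaLead_le
    (hK : ∀ k ∈ Finset.Icc 1 3, ∀ x, ‖iteratedFDeriv ℝ k V x‖ ≤ K) (hdt : 0 ≤ dt) {R : ℝ}
    {q u v : En n} (hu : ‖u‖ ≤ R) (hv : ‖v‖ ≤ R) :
    |alphaLead V dt q u - alphaLead V dt q v| ≤ (dt / 2 * K ^ 2 + K * R ^ 2 / 4) * ‖u - v‖ := by
  have hgrad : ‖gradient V q‖ ≤ K := norm_gradient_le (hK 1 (by simp) q)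
  have hhess : ‖fderiv ℝ (gradient V) q‖ ≤ K := by
    rw [← norm_iteratedFDeriv_one, norm_iteratedFDeriv_gradient]
    exact hK 2 (by simp) q
  have hK0 : 0 ≤ K := (norm_nonneg _).trans hgrad
  have hquad : |⟪gradient V q, fderiv ℝ (gradient V) q (u - v)⟫| ≤ K * (K * ‖u - v‖) :=
    (abs_real_inner_le_norm _ _).trans
      (by gcongr; exact ContinuousLinearMap.le_of_opNorm_le _ hhess _)
  have hcubic : |iteratedFDeriv ℝ 3 V q (fun _ => u) - iteratedFDeriv ℝ 3 V q (fun _ => v)| ≤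
      K * 3 * R ^ 2 * ‖u - v‖ := by
    calc _ ≤ ‖iteratedFDeriv ℝ 3 V q‖ * 3 * max ‖fun _ : Fin 3 => u‖ ‖fun _ : Fin 3 => v‖ ^ 2 *
          ‖(fun _ : Fin 3 => u) - fun _ => v‖ := by
          simpa using (iteratedFDeriv ℝ 3 V q).norm_image_sub_le (fun _ => u) (fun _ => v)
      _ = ‖iteratedFDeriv ℝ 3 V q‖ * 3 * max ‖u‖ ‖v‖ ^ 2 * ‖u - v‖ := by
          rw [pi_norm_const, pi_norm_const, Pi.sub_def, pi_norm_const]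
      _ ≤ K * 3 * R ^ 2 * ‖u - v‖ := by
          gcongr
          · exact hK 3 (by simp) q
          · exact max_le hu hv
  calc _ = |dt / 2 * ⟪gradient V q, fderiv ℝ (gradient V) q (u - v)⟫ - 1 / 12 *
        (iteratedFDeriv ℝ 3 V q (fun _ => u) - iteratedFDeriv ℝ 3 V q (fun _ => v))| := by
        rw [alphaLead, alphaLead, map_sub, inner_sub_right]
        ring_nf
    _ ≤ dt / 2 * (K * (K * ‖u - v‖)) + 1 / 12 * (K * 3 * R ^ 2 * ‖u - v‖) := by
        refine (abs_sub _ _).trans (add_le_add ?_ ?_) <;>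
          rw [abs_mul, abs_of_nonneg (by positivity)] <;> gcongr
    _ = (dt / 2 * K ^ 2 + K * R ^ 2 / 4) * ‖u - v‖ := by ring

lemma abs_alphaMH_propMove_sub_le (hV : ContDiff ℝ 4 V) (hK1 : 1 ≤ K)
    (hK : ∀ k ∈ Finset.Icc 1 4, ∀ x, ‖iteratedFDeriv ℝ k V x‖ ≤ K) (hdt : 0 < dt) (hdt2 : dt ≤ 2)
    (q g : En n) :
    |alphaMH V dt q (propMove V dt q g) - dt ^ ((3 : ℝ) / 2) * xi V q g| ≤
      5 / 2 * K * dt ^ 2 * (‖g‖ + K) ^ 4 := by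
  set s := √(2 * dt)
  set r := ‖g‖ + K
  set h := s • g - dt • gradient V q
  have hs : s ^ 2 = 2 * dt := Real.sq_sqrt (by positivity)
  have hdts : dt ≤ s := Real.le_sqrt_of_sq_le (by nlinarith)
  have hu : ‖s • g‖ = s * ‖g‖ := by rw [norm_smul, Real.norm_of_nonneg (Real.sqrt_nonneg _)]
  have hdrift : ‖dt • gradient V q‖ ≤ dt * K := by
    rw [norm_smul, Real.norm_of_nonneg hdt.le]
    gcongr
    exact norm_gradient_le (hK 1 (by simp) q)
  have hur : ‖s • g‖ ≤ s * r := by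
    rw [hu]
    gcongr
    exact le_add_of_nonneg_right (by linarith)
  have hhr : ‖h‖ ≤ s * r := by
    calc ‖h‖ ≤ ‖s • g‖ + ‖dt • gradient V q‖ := norm_sub_le _ _
      _ ≤ s * ‖g‖ + s * K := by rw [hu]; gcongr; exact hdrift.trans (by gcongr)
      _ = s * r := (mul_add _ _ _).symm
  have hmove : propMove V dt q g = q + h := by rw [propMove]; module
  have htaylor := abs_alphaMH_add_sub_alphaLead_le hV hK hdt q h
  have hshift := abs_alphaLead_sub_alphaLead_le (dt := dt) (q := q)
    (fun k hk => hK k (Finset.Icc_subset_Icc_right (by norm_num) hk)) hdt.le hhr hur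
  rw [show h - s • g = -(dt • gradient V q) by module, norm_neg] at hshift
  rw [hmove, ← alphaLead_sqrt_smul V hdt]
  calc _ ≤ _ := abs_sub_le _ (alphaLead V dt q h) _
    _ ≤ (K * (s * r) ^ 4 / 8 + dt / 2 * (K ^ 2 * (s * r) ^ 2)) +
        (dt / 2 * K ^ 2 + K * (s * r) ^ 2 / 4) * (dt * K) := by
        refine add_le_add (htaylor.trans ?_) (hshift.trans ?_) <;> gcongr
    _ = K * dt ^ 2 * (1 / 2 * r ^ 4 + 3 / 2 * (K * r ^ 2) + 1 / 2 * K ^ 2) := by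
        rw [mul_pow, mul_pow, show s ^ 4 = (s ^ 2) ^ 2 by ring, hs]
        ring
    _ ≤ K * dt ^ 2 * (5 / 2 * r ^ 4) := by
        have hKr : K ≤ r ^ 2 := by nlinarith [norm_nonneg g]
        gcongr
        nlinarith [mul_self_le_mul_self (by positivity) hKr,
          mul_le_mul_of_nonneg_right hKr (sq_nonneg r)]
    _ = 5 / 2 * K * dt ^ 2 * r ^ 4 := by ring

end MetropolisHastings

lemma one_add_pow_le_two_mul_one_add_pow {x : ℝ} (hx : 0 ≤ x) {m n : ℕ} (hmn : m ≤ n) :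
    1 + x ^ m ≤ 2 * (1 + x ^ n) := by
  rcases le_total x 1 with h1 | h1
  · linarith [pow_le_one₀ hx h1 (n := m), pow_nonneg hx n]
  · linarith [pow_le_pow_right₀ h1 hmn, pow_nonneg hx n]

theorem stmt0_general {n : ℕ} {V : En n → ℝ} (hV : ContDiff ℝ 4 V) {K : ℝ}
    (hK : ∀ k ∈ Finset.Icc 1 4, ∀ q, ‖iteratedFDeriv ℝ k V q‖ ≤ K) :
    ∃ C ≥ (0 : ℝ), ∀ dt : ℝ, 0 < dt → dt ≤ 2 → ∀ q g : En n,
      |alphaMH V dt q (propMove V dt q g) - dt ^ ((3 : ℝ) / 2) * xi V q g| ≤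
        C * dt ^ 2 * (1 + ‖g‖ ^ 4) := by
  set B := max 1 K
  have hB : 1 ≤ B := le_max_left 1 K
  refine ⟨20 * B ^ 5, by positivity, fun dt hdt hdt2 q g => ?_⟩
  have hpow : (‖g‖ + B) ^ 4 ≤ 8 * (B ^ 4 * (1 + ‖g‖ ^ 4)) := by
    calc (‖g‖ + B) ^ 4 ≤ 2 ^ 3 * (‖g‖ ^ 4 + B ^ 4) := add_pow_le (norm_nonneg g) (by positivity) 4
      _ ≤ 8 * (B ^ 4 * (1 + ‖g‖ ^ 4)) := by
        nlinarith [le_mul_of_one_le_left (by positivity : 0 ≤ ‖g‖ ^ 4) (one_le_pow₀ hB : 1 ≤ B ^ 4)]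
  calc _ ≤ 5 / 2 * B * dt ^ 2 * (‖g‖ + B) ^ 4 :=
        abs_alphaMH_propMove_sub_le hV hB (fun k hk x => (hK k hk x).trans (le_max_right 1 K))
          hdt hdt2 q g
    _ ≤ 5 / 2 * B * dt ^ 2 * (8 * (B ^ 4 * (1 + ‖g‖ ^ 4))) := by gcongr
    _ = 20 * B ^ 5 * dt ^ 2 * (1 + ‖g‖ ^ 4) := by ring

theorem stmt0 (n : ℕ) (hn : 1 ≤ n) (L : ℝ) (hL : 0 < L)
    (V : En n → ℝ) (hV : ContDiff ℝ (⊤ : ℕ∞) V)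
    (hper : ∀ (q : En n) (i : Fin n), V (q + L • EuclideanSpace.single i (1 : ℝ)) = V q) :
    ∃ C ≥ (0 : ℝ), ∃ dts > (0 : ℝ), ∀ dt : ℝ, 0 < dt → dt ≤ dts → ∀ q g : En n,
      |alphaMH V dt q (propMove V dt q g) - dt ^ ((3 : ℝ) / 2) * xi V q g| ≤
        C * dt ^ 2 * (1 + ‖g‖ ^ 6) := by
  have hV4 : ContDiff ℝ (4 : ℕ) V := contDiff_infty.1 hV 4
  obtain ⟨K, hK⟩ := exists_norm_iteratedFDeriv_le_of_periodic_single hL.ne' hV4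
    fun i q => hper q i
  obtain ⟨C, hC, hα⟩ := stmt0_general hV4 fun k hk => hK k (Finset.mem_Icc.1 hk).2
  refine ⟨2 * C, by positivity, 2, two_pos, fun dt hdt hdt2 q g => ?_⟩
  calc _ ≤ C * dt ^ 2 * (1 + ‖g‖ ^ 4) := hα dt hdt hdt2 q g
    _ ≤ C * dt ^ 2 * (2 * (1 + ‖g‖ ^ 6)) := by
      gcongr
      exact one_add_pow_le_two_mul_one_add_pow (norm_nonneg g) (by norm_num)
    _ = 2 * C * dt ^ 2 * (1 + ‖g‖ ^ 6) := by ring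
end
end

section
/- There exist Δt* > 0, C > 0 and λ > 0 such that for all 0 < Δt ≤ Δt*, all n ∈ ℕ and every bounded measurable L-periodic function f : ℝⁿ → ℝ with ∫_M f dμ = 0, one has ‖P_Δtⁿ f‖_∞ ≤ C e^{−λ n Δt} ‖f‖_∞. -/
/-!
Doeblin's argument, with a minorization that is uniform in the time step.

Write `p` for the proposal density and `k` for the density of accepted moves, so that
`e^{-V(x)} k(x, y) = min (e^{-V(x)} p(x, y)) (e^{-V(y)} p(y, x))`. Expanding the square in `p`, the
drift contributes `e^{-⟨∇V(x), y - x⟩ / 2}`, so by Taylor's formula both fluxes are at least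
`e^{-A t} e^{-(V(x) + V(y)) / 2} h_s(x, y)`, where `h_s` is the heat kernel at the slightly
shortened time `s = t / (1 + 2 K t)`. Hence one step of the chain dominates `e^{-A t}` times the
heat semigroup conjugated by `e^{-V / 2}`. The semigroup property makes this bound stable under
composition: `m` steps dominate `e^{-A m t}` times the conjugated heat kernel at time `m s`. For
`1 ≤ m t ≤ 1 + T` that kernel is bounded below on the fundamental domain, so `P^m g ≥ α μ(g)` for
`g ≥ 0`, with `α` independent of `t`.

Applied to `B ± f` with `μ(f) = 0` and `|f| ≤ B`, this gives `|P^m f| ≤ (1 - α) B`. As `μ` is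
invariant and `P` does not expand the supremum norm, the estimate iterates over blocks of `m` steps.
-/

open MeasureTheory RealInnerProductSpace

noncomputable section

/-! ### Lattice-periodic functions -/

section Lattice

variable {ι E F : Type*} [NormedAddCommGroup E] [NormedSpace ℝ E]

/-- Invariance of `f` under translation by each vector of the basis `b`, that is, periodicity with
respect to the lattice spanned by `b`. -/
def LatticePeriodic (b : Module.Basis ι ℝ E) (f : E → F) : Prop :=
  ∀ i, Function.Periodic f (b i)

instance isFiniteMeasure_restrict_fundamentalDomain [Finite ι] [FiniteDimensional ℝ E]
    [MeasurableSpace E] (b : Module.Basis ι ℝ E) (μ : Measure E) [IsFiniteMeasureOnCompacts μ] :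
    IsFiniteMeasure (μ.restrict (ZSpan.fundamentalDomain b)) :=
  isFiniteMeasure_restrict.2 (ZSpan.fundamentalDomain_isBounded b).measure_lt_top.ne

instance neZero_restrict_fundamentalDomain [Finite ι] [MeasurableSpace E] [BorelSpace E]
    (b : Module.Basis ι ℝ E) (μ : Measure E) [μ.IsAddHaarMeasure] :
    NeZero (μ.restrict (ZSpan.fundamentalDomain b)) :=
  ⟨fun h => ZSpan.measure_fundamentalDomain_ne_zero b (Measure.restrict_eq_zero.1 h)⟩

namespace LatticePeriodic

variable {b : Module.Basis ι ℝ E} {f : E → F}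

lemma periodic_of_mem_span (hf : LatticePeriodic b f) {v : E}
    (hv : v ∈ Submodule.span ℤ (Set.range b)) : Function.Periodic f v := by
  induction hv using Submodule.span_induction with
  | mem v hv => obtain ⟨i, rfl⟩ := hv; exact hf i
  | zero => exact fun x => by rw [add_zero]
  | add v w _ _ hv hw => exact hv.add_period hw
  | smul a v _ hv => exact hv.zsmul a

lemma apply_fract [Fintype ι] (hf : LatticePeriodic b f) (x : E) :
    f (ZSpan.fract b x) = f x := by
  rw [ZSpan.fract_apply]
  exact (hf.periodic_of_mem_span (ZSpan.floor b x).2).sub_eq x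

lemma fderiv [NormedAddCommGroup F] [NormedSpace ℝ F] (hf : LatticePeriodic b f) :
    LatticePeriodic b (_root_.fderiv ℝ f) := fun i x => by
  rw [← fderiv_comp_add_right, (hf i).funext]

lemma exists_norm_le [Finite ι] [FiniteDimensional ℝ E] [SeminormedAddCommGroup F]
    (hf : LatticePeriodic b f) (hc : Continuous f) : ∃ C, ∀ x, ‖f x‖ ≤ C := by
  have := Fintype.ofFinite ι
  have hcpt := (ZSpan.fundamentalDomain_isBounded b).isCompact_closure
  obtain ⟨C, hC⟩ := hcpt.exists_bound_of_continuousOn hc.continuousOn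
  exact ⟨C, fun x => hf.apply_fract x ▸
    hC _ (subset_closure (ZSpan.fract_mem_fundamentalDomain b x))⟩

variable [NormedAddCommGroup F] [NormedSpace ℝ F] [MeasurableSpace E] [BorelSpace E]
  [FiniteDimensional ℝ E] [Finite ι] (μ : Measure E) [μ.IsAddHaarMeasure]

open scoped Pointwise in
lemma setIntegral_comp_add_right (hf : LatticePeriodic b f) (z : E) :
    ∫ x in ZSpan.fundamentalDomain b, f (x + z) ∂μ =
      ∫ x in ZSpan.fundamentalDomain b, f x ∂μ := by
  set D := ZSpan.fundamentalDomain b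
  have hD := ZSpan.isAddFundamentalDomain' b μ
  have : Countable (Submodule.span ℤ (Set.range b)).toAddSubgroup :=
    inferInstanceAs (Countable (Submodule.span ℤ (Set.range b)))
  have hshift : (· + z) '' D = z +ᵥ D := by
    ext x
    simp only [Set.mem_image, Set.mem_vadd_set, vadd_eq_add, add_comm]
  calc ∫ x in D, f (x + z) ∂μ = ∫ x in z +ᵥ D, f x ∂μ := by
        rw [← hshift, (measurePreserving_add_right μ z).setIntegral_image_emb
          (measurableEmbedding_addRight z)]
    _ = ∫ x in D, f x ∂μ := (hD.vadd_of_comm z).setIntegral_eq hD fun v x => by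
        rw [AddSubgroup.vadd_def, vadd_eq_add, add_comm, hf.periodic_of_mem_span v.2 x]

end LatticePeriodic

/-- Mass transport: pairing the flow along `z` with the flow along `-z` cancels all transports. -/
lemma setIntegral_integral_eq_zero_of_antisymm [MeasurableSpace E] [BorelSpace E]
    [FiniteDimensional ℝ E] [Finite ι] (μ : Measure E) [μ.IsAddHaarMeasure]
    {b : Module.Basis ι ℝ E} {F : E → E → ℝ} (hper : ∀ z, LatticePeriodic b fun x => F x z)
    (hint : Integrable (Function.uncurry F) ((μ.restrict (ZSpan.fundamentalDomain b)).prod μ))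
    (hanti : ∀ x z, F (x + z) (-z) = -F x z) :
    ∫ x in ZSpan.fundamentalDomain b, ∫ z, F x z ∂μ ∂μ = 0 := by
  set D := ZSpan.fundamentalDomain b
  have hflow : ∀ z, ∫ x in D, F x (-z) ∂μ = -∫ x in D, F x z ∂μ := fun z => by
    rw [← (hper (-z)).setIntegral_comp_add_right μ z]
    simp only [hanti, integral_neg]
    rfl
  rw [integral_integral_swap hint, ← self_eq_neg, ← integral_neg]
  simp only [← hflow]
  exact (integral_neg_eq_self (fun z => ∫ x in D, F x z ∂μ) μ).symm

end Lattice

/-! ### Sub-Markov densities -/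

section SubMarkov

variable {X : Type*} [MeasurableSpace X]

/-- The test functions on which the transition operators act: bounded measurable functions,
without identification of functions agreeing almost everywhere. -/
structure BoundedMeasurable (f : X → ℝ) : Prop where
  measurable : Measurable f
  exists_abs_le : ∃ B, ∀ x, |f x| ≤ B

namespace BoundedMeasurable

variable {f g : X → ℝ}

lemma const (c : ℝ) : BoundedMeasurable fun _ : X => c :=
  ⟨measurable_const, |c|, fun _ => le_rfl⟩

lemma add (hf : BoundedMeasurable f) (hg : BoundedMeasurable g) :
    BoundedMeasurable fun x => f x + g x := by
  obtain ⟨A, hA⟩ := hf.exists_abs_le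
  obtain ⟨B, hB⟩ := hg.exists_abs_le
  exact ⟨hf.measurable.add hg.measurable, A + B,
    fun x => (abs_add_le _ _).trans (add_le_add (hA x) (hB x))⟩

lemma mul (hf : BoundedMeasurable f) (hg : BoundedMeasurable g) :
    BoundedMeasurable fun x => f x * g x := by
  obtain ⟨A, hA⟩ := hf.exists_abs_le
  obtain ⟨B, hB⟩ := hg.exists_abs_le
  refine ⟨hf.measurable.mul hg.measurable, A * B, fun x => ?_⟩
  rw [abs_mul]
  exact mul_le_mul (hA x) (hB x) (abs_nonneg _) ((abs_nonneg _).trans (hA x))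

lemma neg (hf : BoundedMeasurable f) : BoundedMeasurable fun x => -f x := by
  simpa using (const (-1)).mul hf

lemma comp {Y : Type*} [MeasurableSpace Y] (hf : BoundedMeasurable f) {φ : Y → X}
    (hφ : Measurable φ) : BoundedMeasurable fun y => f (φ y) := by
  obtain ⟨B, hB⟩ := hf.exists_abs_le
  exact ⟨hf.measurable.comp hφ, B, fun y => hB (φ y)⟩

lemma exp (hf : BoundedMeasurable f) : BoundedMeasurable fun x => Real.exp (f x) := by
  obtain ⟨B, hB⟩ := hf.exists_abs_le
  refine ⟨hf.measurable.exp, Real.exp B, fun x => ?_⟩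
  rw [Real.abs_exp]
  exact Real.exp_le_exp.2 ((le_abs_self _).trans (hB x))

lemma integrable_mul (hf : BoundedMeasurable f) {μ : Measure X} (hg : Integrable g μ) :
    Integrable (fun x => g x * f x) μ := by
  obtain ⟨B, hB⟩ := hf.exists_abs_le
  exact hg.mul_bdd hf.measurable.aestronglyMeasurable (Filter.Eventually.of_forall hB)

lemma integrable (hf : BoundedMeasurable f) (μ : Measure X) [IsFiniteMeasure μ] :
    Integrable f μ := by
  simpa using hf.integrable_mul (integrable_const (μ := μ) (1 : ℝ))

end BoundedMeasurable

/-- `k x` is the density with respect to `μ` of a sub-probability measure, measurably in `x`. -/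
structure IsSubMarkovDensity (μ : Measure X) (k : X → X → ℝ) : Prop where
  measurable : Measurable (Function.uncurry k)
  nonneg : ∀ x y, 0 ≤ k x y
  integrable : ∀ x, Integrable (k x) μ
  integral_le_one : ∀ x, ∫ y, k x y ∂μ ≤ 1

/-- The operator on functions with kernel `k` with respect to `μ`. -/
def kernelOperator (μ : Measure X) (k : X → X → ℝ) (f : X → ℝ) (x : X) : ℝ :=
  ∫ y, k x y * f y ∂μ

/-- The transition operator of the chain that jumps from `x` with density `k x` and otherwise
stays at `x`; the holding probability `1 - ∫ k x` is hidden in the difference `f y - f x`. -/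
def jumpOperator (μ : Measure X) (k : X → X → ℝ) (f : X → ℝ) (x : X) : ℝ :=
  f x + ∫ y, k x y * (f y - f x) ∂μ

variable {μ : Measure X} {k : X → X → ℝ} {f g : X → ℝ}

lemma jumpOperator_commute_add_const (μ : Measure X) (k : X → X → ℝ) (c : ℝ) :
    Function.Commute (jumpOperator μ k) fun f x => f x + c := fun f => by
  ext x
  simp only [jumpOperator, add_sub_add_right_eq_sub, add_right_comm]

lemma jumpOperator_commute_neg (μ : Measure X) (k : X → X → ℝ) :
    Function.Commute (jumpOperator μ k) fun f x => -f x := fun f => by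
  ext x
  simp only [jumpOperator, ← neg_sub', mul_neg, integral_neg, neg_add]

namespace IsSubMarkovDensity

lemma of_le {l : X → X → ℝ} (hl : IsSubMarkovDensity μ l) (hk : Measurable (Function.uncurry k))
    (h0 : ∀ x y, 0 ≤ k x y) (hkl : ∀ x y, k x y ≤ l x y) : IsSubMarkovDensity μ k := by
  have hint : ∀ x, Integrable (k x) μ := fun x =>
    (hl.integrable x).mono' (hk.comp measurable_prodMk_left).aestronglyMeasurable
      (Filter.Eventually.of_forall fun y => (Real.norm_of_nonneg (h0 x y)).trans_le (hkl x y))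
  exact ⟨hk, h0, hint, fun x =>
    (integral_mono (hint x) (hl.integrable x) (hkl x)).trans (hl.integral_le_one x)⟩

lemma comp_left (hk : IsSubMarkovDensity μ k) {φ : X → X} (hφ : Measurable φ) :
    IsSubMarkovDensity μ fun x => k (φ x) where
  measurable := hk.measurable.comp ((hφ.comp measurable_fst).prodMk measurable_snd)
  nonneg x := hk.nonneg (φ x)
  integrable x := hk.integrable (φ x)
  integral_le_one x := hk.integral_le_one (φ x)

lemma abs_kernelOperator_le (hk : IsSubMarkovDensity μ k) {B : ℝ} (hB : ∀ x, |f x| ≤ B) (x : X) :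
    |kernelOperator μ k f x| ≤ (∫ y, k x y ∂μ) * B := by
  rw [← integral_mul_const, ← Real.norm_eq_abs]
  refine norm_integral_le_of_norm_le ((hk.integrable x).mul_const B)
    (Filter.Eventually.of_forall fun y => ?_)
  rw [norm_mul, Real.norm_of_nonneg (hk.nonneg x y)]
  exact mul_le_mul_of_nonneg_left (hB y) (hk.nonneg x y)

lemma boundedMeasurable_kernelOperator [SFinite μ] (hk : IsSubMarkovDensity μ k)
    (hf : BoundedMeasurable f) : BoundedMeasurable (kernelOperator μ k f) := by
  obtain ⟨B, hB⟩ := hf.exists_abs_le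
  have hmeas : Measurable (Function.uncurry fun x y => k x y * f y) :=
    hk.measurable.mul (hf.measurable.comp measurable_snd)
  refine ⟨hmeas.stronglyMeasurable.integral_prod_right.measurable, B, fun x => ?_⟩
  exact (hk.abs_kernelOperator_le hB x).trans
    (mul_le_of_le_one_left ((abs_nonneg _).trans (hB x)) (hk.integral_le_one x))

lemma kernelOperator_mono (hk : IsSubMarkovDensity μ k) (hf : BoundedMeasurable f)
    (hg : BoundedMeasurable g) (hfg : ∀ x, f x ≤ g x) (x : X) :
    kernelOperator μ k f x ≤ kernelOperator μ k g x :=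
  integral_mono (hf.integrable_mul (hk.integrable x)) (hg.integrable_mul (hk.integrable x))
    fun y => mul_le_mul_of_nonneg_left (hfg y) (hk.nonneg x y)

lemma jumpOperator_eq (hk : IsSubMarkovDensity μ k) (hf : BoundedMeasurable f) (x : X) :
    jumpOperator μ k f x = (1 - ∫ y, k x y ∂μ) * f x + kernelOperator μ k f x := by
  have hi := hk.integrable x
  simp only [jumpOperator, kernelOperator, mul_sub]
  rw [integral_sub (hf.integrable_mul hi) (hi.mul_const _), integral_mul_const]
  ring

lemma kernelOperator_le_jumpOperator (hk : IsSubMarkovDensity μ k) (hf : BoundedMeasurable f)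
    (h0 : ∀ x, 0 ≤ f x) (x : X) : kernelOperator μ k f x ≤ jumpOperator μ k f x := by
  rw [hk.jumpOperator_eq hf]
  exact le_add_of_nonneg_left (mul_nonneg (sub_nonneg.2 (hk.integral_le_one x)) (h0 x))

lemma jumpOperator_nonneg (hk : IsSubMarkovDensity μ k) (hf : BoundedMeasurable f)
    (h0 : ∀ x, 0 ≤ f x) (x : X) : 0 ≤ jumpOperator μ k f x :=
  (integral_nonneg fun y => mul_nonneg (hk.nonneg x y) (h0 y)).trans
    (hk.kernelOperator_le_jumpOperator hf h0 x)

lemma abs_jumpOperator_le (hk : IsSubMarkovDensity μ k) (hf : Measurable f) {B : ℝ}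
    (hB : ∀ x, |f x| ≤ B) (x : X) : |jumpOperator μ k f x| ≤ B := by
  have h0 := sub_nonneg.2 (hk.integral_le_one x)
  rw [hk.jumpOperator_eq ⟨hf, B, hB⟩]
  calc _ ≤ |(1 - ∫ y, k x y ∂μ) * f x| + |kernelOperator μ k f x| := abs_add_le _ _
    _ ≤ (1 - ∫ y, k x y ∂μ) * B + (∫ y, k x y ∂μ) * B := by
        rw [abs_mul, abs_of_nonneg h0]
        exact add_le_add (mul_le_mul_of_nonneg_left (hB x) h0) (hk.abs_kernelOperator_le hB x)
    _ = B := by ring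

lemma boundedMeasurable_jumpOperator [SFinite μ] (hk : IsSubMarkovDensity μ k)
    (hf : BoundedMeasurable f) : BoundedMeasurable (jumpOperator μ k f) := by
  obtain ⟨B, hB⟩ := hf.exists_abs_le
  refine ⟨?_, B, hk.abs_jumpOperator_le hf.measurable hB⟩
  rw [funext (hk.jumpOperator_eq hf)]
  have hκ : Measurable fun x => ∫ y, k x y ∂μ :=
    hk.measurable.stronglyMeasurable.integral_prod_right.measurable
  exact ((hκ.const_sub 1).mul hf.measurable).add
    (hk.boundedMeasurable_kernelOperator hf).measurable

lemma integrable_prod [SFinite μ] (hk : IsSubMarkovDensity μ k) {ν : Measure X} [SFinite ν]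
    (hf : Integrable f ν) : Integrable (fun p : X × X => f p.1 * k p.1 p.2) (ν.prod μ) := by
  have hmeas : AEStronglyMeasurable (fun p : X × X => f p.1 * k p.1 p.2) (ν.prod μ) :=
    hf.aestronglyMeasurable.comp_fst.mul hk.measurable.aestronglyMeasurable
  refine (integrable_prod_iff hmeas).2
    ⟨Filter.Eventually.of_forall fun x => (hk.integrable x).const_mul (f x), ?_⟩
  have hmass : ∀ x, ∫ y, ‖f x * k x y‖ ∂μ = ‖f x‖ * ∫ y, k x y ∂μ := fun x => by
    simp only [norm_mul, Real.norm_of_nonneg (hk.nonneg x _), integral_const_mul]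
  simp only [hmass]
  refine hf.norm.mul_bdd (c := 1)
    hk.measurable.stronglyMeasurable.integral_prod_right.aestronglyMeasurable
    (Filter.Eventually.of_forall fun x => ?_)
  rw [Real.norm_of_nonneg (integral_nonneg (hk.nonneg x))]
  exact hk.integral_le_one x

lemma kernelOperator_kernelOperator [SFinite μ] {l : X → X → ℝ} (hk : IsSubMarkovDensity μ k)
    (hl : IsSubMarkovDensity μ l) (hf : BoundedMeasurable f) (x : X) :
    kernelOperator μ k (kernelOperator μ l f) x = ∫ z, (∫ y, k x y * l y z ∂μ) * f z ∂μ := by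
  have hint : Integrable (Function.uncurry fun y z => k x y * l y z * f z) (μ.prod μ) :=
    (hf.comp measurable_snd).integrable_mul (hl.integrable_prod (hk.integrable x))
  simp only [kernelOperator, ← integral_const_mul, ← mul_assoc, ← integral_mul_const]
  exact integral_integral_swap hint

end IsSubMarkovDensity

/-- Doeblin's argument: apply the minorization to the nonnegative functions `B ± f`, whose
`π`-average is `B`. -/
lemma abs_iterate_jumpOperator_le_of_minorization {π : Measure X} [IsProbabilityMeasure π]
    {α : ℝ} {m : ℕ} {x : X}
    (hmin : ∀ g : X → ℝ, BoundedMeasurable g → (∀ y, 0 ≤ g y) →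
      α * ∫ y, g y ∂π ≤ (jumpOperator μ k)^[m] g x)
    (hf : Measurable f) {B : ℝ} (hB : ∀ y, |f y| ≤ B) (hf0 : ∫ y, f y ∂π = 0) :
    |(jumpOperator μ k)^[m] f x| ≤ (1 - α) * B := by
  have hlower : ∀ g : X → ℝ, BoundedMeasurable g → (∀ y, -B ≤ g y) → ∫ y, g y ∂π = 0 →
      -((1 - α) * B) ≤ (jumpOperator μ k)^[m] g x := fun g hg hgB hg0 => by
    have hmean : ∫ y, (g y + B) ∂π = B := by
      rw [integral_add (hg.integrable π) (integrable_const B), hg0, integral_const,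
        probReal_univ, one_smul, zero_add]
    have h := hmin _ (hg.add (.const B)) fun y => by linarith [hgB y]
    have hcomm := ((jumpOperator_commute_add_const μ k B).iterate_left m).eq g
    rw [hmean, hcomm] at h
    linarith
  have hbm : BoundedMeasurable f := ⟨hf, B, hB⟩
  have hneg := hlower _ hbm.neg (fun y => neg_le_neg (abs_le.1 (hB y)).2)
    (by rw [integral_neg, hf0, neg_zero])
  rw [((jumpOperator_commute_neg μ k).iterate_left m).eq f] at hneg
  exact abs_le.2 ⟨hlower f hbm (fun y => (abs_le.1 (hB y)).1) hf0, neg_le_neg_iff.1 hneg⟩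

end SubMarkov

/-! ### Periodic reversible jump chains -/

section ReversibleJumpChain

variable {ι E : Type*} [NormedAddCommGroup E] [NormedSpace ℝ E] [MeasurableSpace E] [BorelSpace E]
  {b : Module.Basis ι ℝ E} {μ : Measure E} [μ.IsAddHaarMeasure] {k : E → E → ℝ} {f w : E → ℝ}

lemma LatticePeriodic.jumpOperator (hf : LatticePeriodic b f)
    (hk : ∀ i x y, k (x + b i) (y + b i) = k x y) : LatticePeriodic b (jumpOperator μ k f) :=
  fun i x => by
    simp only [_root_.jumpOperator, hf i x]
    rw [← integral_add_right_eq_self _ (b i)]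
    simp only [hk, hf i _]

variable [FiniteDimensional ℝ E]

lemma IsSubMarkovDensity.comp_add_left (hk : IsSubMarkovDensity μ k) :
    IsSubMarkovDensity μ fun x z => k x (x + z) where
  measurable := hk.measurable.comp (measurable_fst.prodMk (measurable_fst.add measurable_snd))
  nonneg x z := hk.nonneg x (x + z)
  integrable x := (hk.integrable x).comp_add_left x
  integral_le_one x := (integral_add_left_eq_self (k x) x).trans_le (hk.integral_le_one x)

/-- Reversibility makes the flow `w x * k x y * (f y - f x)` antisymmetric in `x` and `y`. -/
lemma setIntegral_mul_jumpOperator_of_detailedBalance [Finite ι] (hk : IsSubMarkovDensity μ k)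
    (hkper : ∀ i x y, k (x + b i) (y + b i) = k x y)
    (hbal : ∀ x y, w x * k x y = w y * k y x)
    (hw : BoundedMeasurable w) (hwper : LatticePeriodic b w)
    (hf : BoundedMeasurable f) (hfper : LatticePeriodic b f) :
    ∫ x in ZSpan.fundamentalDomain b, w x * jumpOperator μ k f x ∂μ =
      ∫ x in ZSpan.fundamentalDomain b, w x * f x ∂μ := by
  have := Fintype.ofFinite ι
  set D := ZSpan.fundamentalDomain b
  set F : E → E → ℝ := fun x z => w x * (k x (x + z) * (f (x + z) - f x)) with hF
  have hFint : Integrable (Function.uncurry F) ((μ.restrict D).prod μ) := by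
    have hdiff : BoundedMeasurable fun p : E × E => f (p.1 + p.2) + -f p.1 :=
      (hf.comp (measurable_fst.add measurable_snd)).add (hf.comp measurable_fst).neg
    refine (hdiff.integrable_mul (hk.comp_add_left.integrable_prod (hw.integrable _))).congr
      (Filter.Eventually.of_forall fun p => ?_)
    simp only [Function.uncurry, hF, sub_eq_add_neg, mul_assoc]
  have hflow : ∀ x, w x * jumpOperator μ k f x = w x * f x + ∫ z, F x z ∂μ := fun x => by
    rw [hF, integral_const_mul,
      integral_add_left_eq_self (fun y => k x y * (f y - f x)) x, jumpOperator, mul_add]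
  have hFint' : Integrable (fun x => ∫ z, F x z ∂μ) (μ.restrict D) := hFint.integral_prod_left
  simp only [hflow]
  rw [integral_add ((hw.mul hf).integrable _) hFint',
    setIntegral_integral_eq_zero_of_antisymm μ (fun z i x => ?_) hFint fun x z => ?_, add_zero]
  · have := hfper i (x + z)
    simp only [hF, add_right_comm x (b i) z, hkper, this, hfper i x, hwper i x]
  · simp only [hF, add_neg_cancel_right]
    linear_combination (f x - f (x + z)) * hbal (x + z) x

end ReversibleJumpChain

/-! ### The heat kernel -/

section HeatKernel

variable {E : Type*} [NormedAddCommGroup E] [InnerProductSpace ℝ E]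

/-- The transition density at time `t` of the diffusion on `E` with generator the Laplacian,
that is, of Brownian motion run at double speed. -/
def heatKernel (t : ℝ) (x y : E) : ℝ :=
  (4 * Real.pi * t) ^ (-(Module.finrank ℝ E : ℝ) / 2) * Real.exp (-‖y - x‖ ^ 2 / (4 * t))

variable {s t : ℝ}

lemma heatKernel_pos (ht : 0 < t) (x y : E) : 0 < heatKernel t x y := by
  rw [heatKernel]
  positivity

lemma heatKernel_comm (t : ℝ) (x y : E) : heatKernel t x y = heatKernel t y x := by
  rw [heatKernel, heatKernel, norm_sub_rev]

lemma heatKernel_add_right (t : ℝ) (x y v : E) :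
    heatKernel t (x + v) (y + v) = heatKernel t x y := by
  rw [heatKernel, heatKernel, add_sub_add_right_eq_sub]

lemma norm_sq_div_add_norm_sub_sq_div (hs : 0 < s) (ht : 0 < t) (a b : E) :
    ‖a‖ ^ 2 / s + ‖b - a‖ ^ 2 / t =
      ‖b‖ ^ 2 / (s + t) + ‖a - (s / (s + t)) • b‖ ^ 2 / (s * t / (s + t)) := by
  have _ : 0 < s + t := add_pos hs ht
  rw [norm_sub_sq_real, norm_sub_sq_real, inner_smul_right, norm_smul, mul_pow,
    Real.norm_eq_abs, sq_abs, real_inner_comm]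
  field_simp
  ring

lemma heatKernel_mul_heatKernel (hs : 0 < s) (ht : 0 < t) (x y z : E) :
    heatKernel s x y * heatKernel t y z =
      heatKernel (s + t) x z * heatKernel (s * t / (s + t)) (x + (s / (s + t)) • (z - x)) y := by
  have _ : 0 < s + t := add_pos hs ht
  have hsq := norm_sq_div_add_norm_sub_sq_div hs ht (y - x) (z - x)
  rw [sub_sub_sub_cancel_right, sub_sub] at hsq
  have hconst : 4 * Real.pi * s * (4 * Real.pi * t) =
      4 * Real.pi * (s + t) * (4 * Real.pi * (s * t / (s + t))) := by field_simp
  simp only [heatKernel]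
  rw [mul_mul_mul_comm, ← Real.mul_rpow (by positivity) (by positivity), hconst,
    Real.mul_rpow (by positivity) (by positivity), ← Real.exp_add, mul_mul_mul_comm,
    ← Real.exp_add]
  congr 2
  linear_combination (norm := (field_simp; ring)) (-1 / 4) * hsq

/-- Moving the starting point by `-t • a` tilts the heat kernel by the exponential martingale of
Girsanov's formula. -/
lemma heatKernel_sub_smul_left (ht : 0 < t) (a x y : E) :
    heatKernel t (x - t • a) y =
      Real.exp (-⟪a, y - x⟫ / 2 - t * ‖a‖ ^ 2 / 4) * heatKernel t x y := by
  rw [heatKernel, heatKernel, mul_left_comm, ← Real.exp_add, sub_sub_eq_add_sub,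
    add_sub_right_comm, norm_add_sq_real, inner_smul_right, norm_smul, mul_pow, Real.norm_eq_abs,
    sq_abs, real_inner_comm]
  congr 2
  field_simp
  ring

/-- Shortening the time so that `1 / (4 * t)` becomes `1 / (4 * t) + K / 2` gains a Gaussian
factor. -/
lemma heatKernel_div_le {K : ℝ} (hK : 0 ≤ K) (ht : 0 < t) (x y : E) :
    heatKernel (t / (1 + 2 * K * t)) x y ≤
      Real.exp (Module.finrank ℝ E * K * t - K / 2 * ‖y - x‖ ^ 2) * heatKernel t x y := by
  set d := (Module.finrank ℝ E : ℝ)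
  have h1 : 0 < 1 + 2 * K * t := by positivity
  have hpow : (1 + 2 * K * t) ^ (d / 2) ≤ Real.exp (d * K * t) := calc
    _ ≤ Real.exp (2 * K * t) ^ (d / 2) :=
      Real.rpow_le_rpow h1.le (by linarith [Real.add_one_le_exp (2 * K * t)]) (by positivity)
    _ = Real.exp (d * K * t) := by rw [← Real.exp_mul]; congr 1; ring
  have hconst : (4 * Real.pi * (t / (1 + 2 * K * t))) ^ (-d / 2) =
      (1 + 2 * K * t) ^ (d / 2) * (4 * Real.pi * t) ^ (-d / 2) := by
    rw [← mul_div_assoc, Real.div_rpow (by positivity) h1.le, neg_div, Real.rpow_neg h1.le,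
      div_inv_eq_mul, mul_comm]
  have hexp : Real.exp (-‖y - x‖ ^ 2 / (4 * (t / (1 + 2 * K * t)))) =
      Real.exp (-(K / 2 * ‖y - x‖ ^ 2)) * Real.exp (-‖y - x‖ ^ 2 / (4 * t)) := by
    rw [← Real.exp_add]
    congr 1
    field_simp
    ring
  rw [heatKernel, heatKernel, hconst, hexp, mul_mul_mul_comm, sub_eq_add_neg (d * K * t),
    Real.exp_add]
  gcongr

lemma le_heatKernel {a b R : ℝ} {x y : E} (ha : 0 < a) (hat : a ≤ t) (htb : t ≤ b)
    (hR : ‖y - x‖ ≤ R) :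
    (4 * Real.pi * b) ^ (-(Module.finrank ℝ E : ℝ) / 2) * Real.exp (-R ^ 2 / (4 * a)) ≤
      heatKernel t x y := by
  have ht := ha.trans_le hat
  have hsq : ‖y - x‖ ^ 2 / (4 * t) ≤ R ^ 2 / (4 * a) := by gcongr
  refine mul_le_mul ?_ (Real.exp_le_exp.2 ?_) (Real.exp_pos _).le (by positivity)
  · refine Real.rpow_le_rpow_of_nonpos (by positivity) (by gcongr) ?_
    exact div_nonpos_of_nonpos_of_nonneg (neg_nonpos.2 (Nat.cast_nonneg _)) zero_le_two
  · rw [neg_div, neg_div]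
    exact neg_le_neg hsq

variable [FiniteDimensional ℝ E] [MeasurableSpace E] [BorelSpace E]

lemma measurable_heatKernel (t : ℝ) : Measurable (Function.uncurry (heatKernel (E := E) t)) := by
  have : Continuous (Function.uncurry (heatKernel (E := E) t)) := by
    unfold heatKernel Function.uncurry
    fun_prop
  exact this.measurable

lemma integral_heatKernel (ht : 0 < t) (x : E) : ∫ y, heatKernel t x y = 1 := by
  have hgauss := GaussianFourier.integral_rexp_neg_mul_sq_norm (V := E)
    (inv_pos.2 (mul_pos four_pos ht))
  simp only [heatKernel, integral_const_mul]
  rw [integral_sub_right_eq_self fun y => Real.exp (-‖y‖ ^ 2 / (4 * t))]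
  simp only [neg_div, div_eq_inv_mul (_ ^ 2), ← neg_mul]
  rw [hgauss, div_inv_eq_mul, ← mul_assoc, mul_comm Real.pi, ← Real.rpow_add (by positivity),
    neg_add_cancel, Real.rpow_zero]

lemma isSubMarkovDensity_heatKernel (ht : 0 < t) :
    IsSubMarkovDensity (volume : Measure E) (heatKernel t) where
  measurable := measurable_heatKernel t
  nonneg x y := (heatKernel_pos ht x y).le
  integrable x := Integrable.of_integral_ne_zero (by rw [integral_heatKernel ht]; exact one_ne_zero)
  integral_le_one x := (integral_heatKernel ht x).le

lemma integral_heatKernel_mul_heatKernel (hs : 0 < s) (ht : 0 < t) (x z : E) :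
    ∫ y, heatKernel s x y * heatKernel t y z = heatKernel (s + t) x z := by
  simp only [heatKernel_mul_heatKernel hs ht, integral_const_mul]
  rw [integral_heatKernel (by positivity), mul_one]

lemma kernelOperator_heatKernel_add (hs : 0 < s) (ht : 0 < t) {f : E → ℝ}
    (hf : BoundedMeasurable f) :
    kernelOperator volume (heatKernel s) (kernelOperator volume (heatKernel t) f) =
      kernelOperator volume (heatKernel (s + t)) f := by
  ext x
  rw [(isSubMarkovDensity_heatKernel hs).kernelOperator_kernelOperator
    (isSubMarkovDensity_heatKernel ht) hf]
  simp only [integral_heatKernel_mul_heatKernel hs ht, kernelOperator]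

end HeatKernel

section HeatMinorization

variable {E : Type*} [NormedAddCommGroup E] [InnerProductSpace ℝ E] [FiniteDimensional ℝ E]
  [MeasurableSpace E] [BorelSpace E] {k : E → E → ℝ} {f w : E → ℝ} {c s : ℝ}

lemma mul_kernelOperator_heatKernel_le_mul_jumpOperator (hs : 0 < s)
    (hk : IsSubMarkovDensity volume k) (hw : BoundedMeasurable w)
    (hlow : ∀ x y, c * (heatKernel s x y * w y) ≤ w x * k x y) (hw0 : ∀ x, 0 ≤ w x)
    (hf : BoundedMeasurable f) (hf0 : ∀ x, 0 ≤ f x) (x : E) :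
    c * kernelOperator volume (heatKernel s) (fun y => w y * f y) x ≤
      w x * jumpOperator volume k f x := by
  have hheat := (isSubMarkovDensity_heatKernel hs).integrable x
  calc c * kernelOperator volume (heatKernel s) (fun y => w y * f y) x
      ≤ w x * kernelOperator volume k f x := by
        rw [kernelOperator, kernelOperator, ← integral_const_mul, ← integral_const_mul]
        refine integral_mono (((hw.mul hf).integrable_mul hheat).const_mul c)
          ((hf.integrable_mul (hk.integrable x)).const_mul _) fun y => ?_
        have := hf0 y
        linear_combination f y * hlow x y
    _ ≤ w x * jumpOperator volume k f x :=
        mul_le_mul_of_nonneg_left (hk.kernelOperator_le_jumpOperator hf hf0 x) (hw0 x)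

/-- Since heat kernels form a semigroup, the constant of a one-step comparison is only raised to
the number of steps. -/
lemma pow_mul_kernelOperator_heatKernel_le_mul_iterate_jumpOperator (hs : 0 < s) (hc : 0 ≤ c)
    (hk : IsSubMarkovDensity volume k) (hw : BoundedMeasurable w)
    (hlow : ∀ x y, c * (heatKernel s x y * w y) ≤ w x * k x y) (hw0 : ∀ x, 0 ≤ w x) (m : ℕ)
    (hf : BoundedMeasurable f) (hf0 : ∀ x, 0 ≤ f x) (x : E) :
    c ^ (m + 1) * kernelOperator volume (heatKernel ((m + 1) * s)) (fun y => w y * f y) x ≤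
      w x * (jumpOperator volume k)^[m + 1] f x := by
  have hone := fun g => mul_kernelOperator_heatKernel_le_mul_jumpOperator (f := g) hs hk hw hlow hw0
  induction m generalizing f with
  | zero => simpa using hone f hf hf0 x
  | succ m ih =>
    have hms : 0 < (m + 1) * s := by positivity
    have hheat := isSubMarkovDensity_heatKernel (E := E) hms
    have hwf := hw.mul hf
    have hPf := hk.boundedMeasurable_jumpOperator hf
    have hHwf := (isSubMarkovDensity_heatKernel hs).boundedMeasurable_kernelOperator hwf
    have htime : ((m + 1 : ℕ) + 1) * s = (m + 1) * s + s := by push_cast; ring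
    calc c ^ (m + 1 + 1) * kernelOperator volume (heatKernel (((m + 1 : ℕ) + 1) * s))
          (fun y => w y * f y) x
        = c ^ (m + 1) * kernelOperator volume (heatKernel ((m + 1) * s))
          (fun y => c * kernelOperator volume (heatKernel s) (fun z => w z * f z) y) x := by
          rw [htime, ← kernelOperator_heatKernel_add hms hs hwf, pow_succ, mul_assoc]
          simp only [kernelOperator, mul_left_comm _ c, integral_const_mul]
      _ ≤ c ^ (m + 1) * kernelOperator volume (heatKernel ((m + 1) * s))
          (fun y => w y * jumpOperator volume k f y) x :=
          mul_le_mul_of_nonneg_left (hheat.kernelOperator_mono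
            ((BoundedMeasurable.const c).mul hHwf) (hw.mul hPf) (hone f hf hf0) x)
            (pow_nonneg hc _)
      _ ≤ w x * (jumpOperator volume k)^[m + 1] (jumpOperator volume k f) x :=
          ih hPf (hk.jumpOperator_nonneg hf hf0)

end HeatMinorization

/-! ### Potentials with Lipschitz gradient -/

section Potential

variable {ι E : Type*} [NormedAddCommGroup E] [InnerProductSpace ℝ E] {b : Module.Basis ι ℝ E}
  {V : E → ℝ}

lemma abs_sub_sub_inner_gradient_le [CompleteSpace E] {K : NNReal} (hV : Differentiable ℝ V)
    (hK : LipschitzWith K (gradient V)) (x y : E) :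
    |V y - V x - ⟪gradient V x, y - x⟫| ≤ K * ‖y - x‖ ^ 2 := by
  have hslope : ∀ z ∈ Metric.closedBall x ‖y - x‖,
      ‖fderiv ℝ V z - fderiv ℝ V x‖ ≤ K * ‖y - x‖ := fun z hz => by
    rw [← toDual_gradient, ← toDual_gradient, ← map_sub, LinearIsometryEquiv.norm_map]
    exact (hK.norm_sub_le z x).trans
      (mul_le_mul_of_nonneg_left (mem_closedBall_iff_norm.1 hz) K.2)
  have hmv := (convex_closedBall x ‖y - x‖).norm_image_sub_le_of_norm_hasFDerivWithin_le'
    (fun z _ => (hV z).hasFDerivAt.hasFDerivWithinAt) hslope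
    (Metric.mem_closedBall_self (norm_nonneg _)) (mem_closedBall_iff_norm.2 le_rfl)
  rwa [← inner_gradient_left, mul_assoc, ← sq] at hmv

lemma LatticePeriodic.gradient [CompleteSpace E] (hV : LatticePeriodic b V) :
    LatticePeriodic b (gradient V) := fun i x => by
  simp only [_root_.gradient, hV.fderiv i x]

lemma LatticePeriodic.exists_lipschitzWith_gradient [Finite ι] [FiniteDimensional ℝ E]
    (hper : LatticePeriodic b V) (hV : ContDiff ℝ 2 V) :
    ∃ K, LipschitzWith K (_root_.gradient V) := by
  have hgrad : ContDiff ℝ 1 (_root_.gradient V) :=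
    (InnerProductSpace.toDual ℝ E).symm.contDiff.comp (hV.fderiv_right (m := 1) le_rfl)
  obtain ⟨C, hC⟩ := hper.gradient.fderiv.exists_norm_le (hgrad.continuous_fderiv one_ne_zero)
  exact ⟨C.toNNReal, lipschitzWith_of_nnnorm_fderiv_le (hgrad.differentiable one_ne_zero)
    fun x => NNReal.le_toNNReal_of_coe_le (hC x)⟩

lemma measurable_gradient [CompleteSpace E] [MeasurableSpace E] [BorelSpace E] (V : E → ℝ) :
    Measurable (gradient V) :=
  (InnerProductSpace.toDual ℝ E).symm.continuous.measurable.comp (measurable_fderiv ℝ V)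

end Potential

/-! ### The Metropolis–Hastings kernel -/

section Metropolis

variable {X : Type*} {w : X → ℝ} {p : X → X → ℝ}

/-- The density of accepted moves when proposals are drawn with density `p` and the target has the
unnormalized density `w`. -/
def metropolisKernel (w : X → ℝ) (p : X → X → ℝ) (x y : X) : ℝ :=
  min 1 (w y * p y x / (w x * p x y)) * p x y

lemma mul_metropolisKernel (hw : ∀ x, 0 < w x) (hp : ∀ x y, 0 < p x y) (x y : X) :
    w x * metropolisKernel w p x y = min (w x * p x y) (w y * p y x) := by
  have hflux : 0 < w x * p x y := mul_pos (hw x) (hp x y)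
  rw [metropolisKernel, mul_left_comm, mul_comm, mul_min_of_nonneg _ _ hflux.le, mul_one,
    mul_div_cancel₀ _ hflux.ne']

lemma isSubMarkovDensity_metropolisKernel [MeasurableSpace X] {μ : Measure X} (hw : ∀ x, 0 ≤ w x)
    (hwm : Measurable w) (hp : IsSubMarkovDensity μ p) :
    IsSubMarkovDensity μ (metropolisKernel w p) := by
  have hflux : Measurable fun q : X × X => w q.1 * p q.1 q.2 :=
    (hwm.comp measurable_fst).mul hp.measurable
  have hacc : ∀ x y, 0 ≤ w y * p y x / (w x * p x y) := fun x y =>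
    div_nonneg (mul_nonneg (hw y) (hp.nonneg y x)) (mul_nonneg (hw x) (hp.nonneg x y))
  refine hp.of_le
    ((measurable_const.min ((hflux.comp measurable_swap).div hflux)).mul hp.measurable)
    (fun x y => mul_nonneg (le_min zero_le_one (hacc x y)) (hp.nonneg x y))
    fun x y => mul_le_of_le_one_left (hp.nonneg x y) (min_le_left _ _)

end Metropolis

/-! ### The Metropolis-adjusted Langevin kernel -/

section Mala

variable {ι E : Type*} [NormedAddCommGroup E] [InnerProductSpace ℝ E] {t : ℝ}

/-- Here `u = V x`, `v = V y` and `a` is the gradient of `V` at `x`: the drift contributes half of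
the increment `v - u`, and the Taylor remainder is absorbed by shortening the time. -/
lemma exp_mul_heatKernel_le_exp_mul_heatKernel_sub_smul {K G u v : ℝ} {a x y : E} (hK : 0 ≤ K)
    (ht : 0 < t) (ha : ‖a‖ ≤ G) (hv : |v - u - ⟪a, y - x⟫| ≤ K * ‖y - x‖ ^ 2) :
    Real.exp (-((Module.finrank ℝ E * K + G ^ 2 / 4) * t)) *
        (Real.exp (-(u + v) / 2) * heatKernel (t / (1 + 2 * K * t)) x y) ≤
      Real.exp (-u) * heatKernel t (x - t • a) y := by
  set d := (Module.finrank ℝ E : ℝ)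
  have hsq : t * ‖a‖ ^ 2 ≤ t * G ^ 2 := by gcongr
  calc _ ≤ Real.exp (-((d * K + G ^ 2 / 4) * t)) * (Real.exp (-(u + v) / 2) *
          (Real.exp (d * K * t - K / 2 * ‖y - x‖ ^ 2) * heatKernel t x y)) := by
        gcongr
        exact heatKernel_div_le hK ht x y
    _ = Real.exp (-((d * K + G ^ 2 / 4) * t) + -(u + v) / 2 + (d * K * t - K / 2 * ‖y - x‖ ^ 2)) *
          heatKernel t x y := by
        rw [Real.exp_add, Real.exp_add]
        ring
    _ ≤ Real.exp (-u + (-⟪a, y - x⟫ / 2 - t * ‖a‖ ^ 2 / 4)) * heatKernel t x y := by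
        have := neg_le_of_abs_le hv
        refine mul_le_mul_of_nonneg_right (Real.exp_le_exp.2 ?_) (heatKernel_pos ht x y).le
        linarith
    _ = Real.exp (-u) * heatKernel t (x - t • a) y := by
        rw [heatKernel_sub_smul_left ht, Real.exp_add, mul_assoc]

variable [CompleteSpace E] {V : E → ℝ}

/-- The transition density of the Euler–Maruyama step for the overdamped Langevin dynamics with
potential `V`: explicit drift for time `t`, followed by heat flow. -/
def langevinProposal (V : E → ℝ) (t : ℝ) (x y : E) : ℝ :=
  heatKernel t (x - t • gradient V x) y

/-- The density of accepted moves of the Metropolis-adjusted Langevin algorithm with potential `V`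
and time step `t`. -/
def malaKernel (V : E → ℝ) (t : ℝ) : E → E → ℝ :=
  metropolisKernel (fun x => Real.exp (-V x)) (langevinProposal V t)

lemma malaKernel_add {b : Module.Basis ι ℝ E} (hV : LatticePeriodic b V) (t : ℝ) (i : ι)
    (x y : E) : malaKernel V t (x + b i) (y + b i) = malaKernel V t x y := by
  have hprop : ∀ x y, langevinProposal V t (x + b i) (y + b i) = langevinProposal V t x y :=
    fun x y => by
      rw [langevinProposal, hV.gradient i x, add_sub_right_comm, heatKernel_add_right]
      rfl
  simp only [malaKernel, metropolisKernel, hprop, hV i _]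

lemma exp_mul_malaKernel (V : E → ℝ) (ht : 0 < t) (x y : E) :
    Real.exp (-V x) * malaKernel V t x y =
      min (Real.exp (-V x) * langevinProposal V t x y)
        (Real.exp (-V y) * langevinProposal V t y x) :=
  mul_metropolisKernel (w := fun x => Real.exp (-V x)) (fun _ => Real.exp_pos _)
    (fun _ _ => heatKernel_pos ht _ _) x y

lemma exp_mul_malaKernel_comm (V : E → ℝ) (ht : 0 < t) (x y : E) :
    Real.exp (-V x) * malaKernel V t x y = Real.exp (-V y) * malaKernel V t y x := by
  rw [exp_mul_malaKernel V ht, exp_mul_malaKernel V ht, min_comm]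

lemma exp_mul_heatKernel_le_exp_mul_malaKernel {K G : ℝ} (hK : 0 ≤ K) (ht : 0 < t)
    (hG : ∀ x, ‖gradient V x‖ ≤ G)
    (hV : ∀ x y, |V y - V x - ⟪gradient V x, y - x⟫| ≤ K * ‖y - x‖ ^ 2) (x y : E) :
    Real.exp (-((Module.finrank ℝ E * K + G ^ 2 / 4) * t)) *
        (heatKernel (t / (1 + 2 * K * t)) x y * Real.exp (-V y / 2)) ≤
      Real.exp (-V x / 2) * malaKernel V t x y := by
  have hxy := exp_mul_heatKernel_le_exp_mul_heatKernel_sub_smul hK ht (hG x) (hV x y)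
  have hyx := exp_mul_heatKernel_le_exp_mul_heatKernel_sub_smul hK ht (hG y) (hV y x)
  rw [heatKernel_comm _ y x, add_comm (V y)] at hyx
  have hflux := (le_min hxy hyx).trans_eq (exp_mul_malaKernel V ht x y).symm
  have hx : Real.exp (-V x) = Real.exp (-V x / 2) * Real.exp (-V x / 2) := by
    rw [← Real.exp_add, add_halves]
  have hsum : Real.exp (-(V x + V y) / 2) = Real.exp (-V x / 2) * Real.exp (-V y / 2) := by
    rw [← Real.exp_add, ← add_div, neg_add]
  rw [hsum, hx] at hflux
  refine le_of_mul_le_mul_left ?_ (Real.exp_pos (-V x / 2))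
  linear_combination hflux

lemma isSubMarkovDensity_malaKernel [FiniteDimensional ℝ E] [MeasurableSpace E] [BorelSpace E]
    (hV : Measurable V) (ht : 0 < t) : IsSubMarkovDensity volume (malaKernel V t) :=
  isSubMarkovDensity_metropolisKernel (fun _ => (Real.exp_pos _).le) hV.neg.exp
    ((isSubMarkovDensity_heatKernel ht).comp_left
      (measurable_id.sub ((measurable_gradient V).const_smul t)))

end Mala

/-! ### The Gibbs measure and the minorization -/

section Gibbs

variable {ι E : Type*} [NormedAddCommGroup E] [InnerProductSpace ℝ E] [FiniteDimensional ℝ E]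
  [MeasurableSpace E] [BorelSpace E]

/-- The Gibbs probability measure, proportional to `exp (-V)`, on the fundamental domain of the
lattice spanned by `b`. Functions on the torus are integrated through their periodic lifts. -/
def gibbsMeasure (b : Module.Basis ι ℝ E) (V : E → ℝ) : Measure E :=
  (volume.restrict (ZSpan.fundamentalDomain b)).tilted fun x => -V x

variable {b : Module.Basis ι ℝ E} {V : E → ℝ}

lemma integral_gibbsMeasure (b : Module.Basis ι ℝ E) (V f : E → ℝ) :
    ∫ x, f x ∂gibbsMeasure b V =
      (∫ x in ZSpan.fundamentalDomain b, Real.exp (-V x))⁻¹ *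
        ∫ x in ZSpan.fundamentalDomain b, Real.exp (-V x) * f x := by
  rw [gibbsMeasure, integral_tilted, ← integral_const_mul]
  simp only [smul_eq_mul, div_eq_inv_mul, mul_assoc]

variable [Finite ι]

lemma isProbabilityMeasure_gibbsMeasure (b : Module.Basis ι ℝ E) (hV : BoundedMeasurable V) :
    IsProbabilityMeasure (gibbsMeasure b V) :=
  isProbabilityMeasure_tilted (hV.neg.exp.integrable _)

lemma setIntegral_exp_neg_pos (b : Module.Basis ι ℝ E) (hV : BoundedMeasurable V) :
    0 < ∫ x in ZSpan.fundamentalDomain b, Real.exp (-V x) :=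
  integral_exp_pos (hV.neg.exp.integrable _)

lemma integral_gibbsMeasure_jumpOperator_malaKernel {t : ℝ} (ht : 0 < t)
    (hV : BoundedMeasurable V) (hVper : LatticePeriodic b V) {f : E → ℝ}
    (hf : BoundedMeasurable f) (hfper : LatticePeriodic b f) :
    ∫ x, jumpOperator volume (malaKernel V t) f x ∂gibbsMeasure b V =
      ∫ x, f x ∂gibbsMeasure b V := by
  rw [integral_gibbsMeasure, integral_gibbsMeasure,
    setIntegral_mul_jumpOperator_of_detailedBalance (isSubMarkovDensity_malaKernel hV.measurable ht)
      (malaKernel_add hVper t) (exp_mul_malaKernel_comm V ht) hV.neg.exp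
      (fun i x => by simp only [hVper i x]) hf hfper]

lemma exists_mul_setIntegral_le_kernelOperator_heatKernel {S : Set E} (hS : Bornology.IsBounded S)
    (hSm : MeasurableSet S) {r R : ℝ} (hr : 0 < r) (hrR : r ≤ R) :
    ∃ h > 0, ∀ t, r ≤ t → t ≤ R → ∀ g, BoundedMeasurable g → (∀ y, 0 ≤ g y) → ∀ x ∈ S,
      h * ∫ y in S, g y ≤ kernelOperator volume (heatKernel t) g x := by
  have hfin : IsFiniteMeasure (volume.restrict S) :=
    isFiniteMeasure_restrict.2 hS.measure_lt_top.ne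
  have hR : 0 < R := hr.trans_le hrR
  refine ⟨(4 * Real.pi * R) ^ (-(Module.finrank ℝ E : ℝ) / 2) *
    Real.exp (-Metric.diam S ^ 2 / (4 * r)), by positivity,
    fun t hrt htR g hg hg0 x hx => ?_⟩
  have ht := hr.trans_le hrt
  have hint := hg.integrable_mul ((isSubMarkovDensity_heatKernel ht).integrable x)
  rw [← integral_const_mul]
  calc _ ≤ ∫ y in S, heatKernel t x y * g y :=
        setIntegral_mono_on ((hg.integrable _).const_mul _) hint.integrableOn hSm fun y hy =>
          mul_le_mul_of_nonneg_right (le_heatKernel hr hrt htR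
            ((dist_eq_norm y x).symm.trans_le (Metric.dist_le_diam_of_mem hS hy hx))) (hg0 y)
    _ ≤ kernelOperator volume (heatKernel t) g x :=
        setIntegral_le_integral hint (Filter.Eventually.of_forall fun y =>
          mul_nonneg (heatKernel_pos ht x y).le (hg0 y))

lemma exists_mul_integral_gibbsMeasure_le_kernelOperator_heatKernel (hV : BoundedMeasurable V)
    {r R : ℝ} (hr : 0 < r) (hrR : r ≤ R) :
    ∃ h > 0, ∀ t, r ≤ t → t ≤ R → ∀ g, BoundedMeasurable g → (∀ y, 0 ≤ g y) →
      ∀ x ∈ ZSpan.fundamentalDomain b, h * ∫ y, g y ∂gibbsMeasure b V ≤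
        kernelOperator volume (heatKernel t) (fun y => Real.exp (-V y / 2) * g y) x := by
  set D := ZSpan.fundamentalDomain b
  obtain ⟨M, hM⟩ := hV.exists_abs_le
  obtain ⟨h, hh, hheat⟩ := exists_mul_setIntegral_le_kernelOperator_heatKernel
    (ZSpan.fundamentalDomain_isBounded b) (ZSpan.fundamentalDomain_measurableSet b) hr hrR
  have hZ := setIntegral_exp_neg_pos b hV
  refine ⟨h * (Real.exp (-(M / 2)) * ∫ y in D, Real.exp (-V y)), by positivity,
    fun t hrt htR g hg hg0 x hx => ?_⟩
  have hweight : BoundedMeasurable fun y => Real.exp (-V y / 2) * g y :=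
    (hV.neg.mul (.const 2⁻¹)).exp.mul hg
  have hle : Real.exp (-(M / 2)) * ∫ y in D, Real.exp (-V y) * g y ≤
      ∫ y in D, Real.exp (-V y / 2) * g y := by
    rw [← integral_const_mul]
    refine integral_mono (((hV.neg.exp.mul hg).integrable _).const_mul _)
      (hweight.integrable _) fun y => ?_
    simp only [← mul_assoc, ← Real.exp_add]
    refine mul_le_mul_of_nonneg_right (Real.exp_le_exp.2 ?_) (hg0 y)
    linarith [neg_le_of_abs_le (hM y)]
  calc _ = h * (Real.exp (-(M / 2)) * ∫ y in D, Real.exp (-V y) * g y) := by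
        rw [integral_gibbsMeasure]
        field_simp
        rfl
    _ ≤ h * ∫ y in D, Real.exp (-V y / 2) * g y := mul_le_mul_of_nonneg_left hle hh.le
    _ ≤ _ := hheat t hrt htR _ hweight (fun y => mul_nonneg (Real.exp_pos _).le (hg0 y)) x hx

lemma exp_mul_kernelOperator_heatKernel_le_exp_mul_iterate_jumpOperator {K G t : ℝ} (hK : 0 ≤ K)
    (ht : 0 < t) (hVb : BoundedMeasurable V) (hG : ∀ x, ‖gradient V x‖ ≤ G)
    (hV : ∀ x y, |V y - V x - ⟪gradient V x, y - x⟫| ≤ K * ‖y - x‖ ^ 2) {m : ℕ} (hm : m ≠ 0)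
    {g : E → ℝ} (hg : BoundedMeasurable g) (hg0 : ∀ y, 0 ≤ g y) (x : E) :
    Real.exp (-((Module.finrank ℝ E * K + G ^ 2 / 4) * (m * t))) *
        kernelOperator volume (heatKernel (m * t / (1 + 2 * K * t)))
          (fun y => Real.exp (-V y / 2) * g y) x ≤
      Real.exp (-V x / 2) * (jumpOperator volume (malaKernel V t))^[m] g x := by
  obtain ⟨j, rfl⟩ := Nat.exists_eq_succ_of_ne_zero hm
  have hw : BoundedMeasurable fun y => Real.exp (-V y / 2) := (hVb.neg.mul (.const 2⁻¹)).exp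
  have h := pow_mul_kernelOperator_heatKernel_le_mul_iterate_jumpOperator
    (div_pos ht (by positivity : 0 < 1 + 2 * K * t)) (Real.exp_pos _).le
    (isSubMarkovDensity_malaKernel hVb.measurable ht) hw
    (exp_mul_heatKernel_le_exp_mul_malaKernel hK ht hG hV) (fun y => (Real.exp_pos _).le) j hg hg0 x
  convert h using 2
  · rw [← Real.exp_nat_mul]
    push_cast
    ring_nf
  · push_cast
    rw [mul_div_assoc]

/-- Over a total time of order one the accumulated constants stay bounded, uniformly in the step. -/
lemma exists_mul_integral_gibbsMeasure_le_iterate_jumpOperator (hV : Differentiable ℝ V)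
    {K : NNReal} (hK : LipschitzWith K (gradient V)) (hper : LatticePeriodic b V) {T : ℝ}
    (hT : 0 < T) :
    ∃ α > 0, ∀ t, 0 < t → t ≤ T → ∀ m : ℕ, 1 ≤ m * t → m * t ≤ 1 + T →
      ∀ g, BoundedMeasurable g → (∀ y, 0 ≤ g y) → ∀ x ∈ ZSpan.fundamentalDomain b,
        α * ∫ y, g y ∂gibbsMeasure b V ≤ (jumpOperator volume (malaKernel V t))^[m] g x := by
  obtain ⟨M, hM⟩ := hper.exists_norm_le hV.continuous
  obtain ⟨G, hG⟩ := hper.gradient.exists_norm_le hK.continuous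
  have hVb : BoundedMeasurable V := ⟨hV.continuous.measurable, M, hM⟩
  have hrR : 1 / (1 + 2 * K * T) ≤ 1 + T :=
    (div_le_one_of_le₀ (le_add_of_nonneg_right (by positivity)) (by positivity)).trans
      (le_add_of_nonneg_right hT.le)
  obtain ⟨h, hh, hheat⟩ := exists_mul_integral_gibbsMeasure_le_kernelOperator_heatKernel
    (b := b) hVb (by positivity) hrR
  set A := Module.finrank ℝ E * K + G ^ 2 / 4
  refine ⟨Real.exp (-(M / 2)) * (Real.exp (-(A * (1 + T))) * h), by positivity,
    fun t ht htT m hm hmT g hg hg0 x hx => ?_⟩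
  set P := (jumpOperator volume (malaKernel V t))^[m] g x
  have hI : 0 ≤ ∫ y, g y ∂gibbsMeasure b V := integral_nonneg hg0
  have hflux : Real.exp (-(A * (1 + T))) * (h * ∫ y, g y ∂gibbsMeasure b V) ≤
      Real.exp (-V x / 2) * P :=
    calc _ ≤ Real.exp (-(A * (m * t))) * kernelOperator volume
          (heatKernel (m * t / (1 + 2 * K * t))) (fun y => Real.exp (-V y / 2) * g y) x :=
          mul_le_mul (by gcongr) (hheat _ (by gcongr)
            ((div_le_self (by positivity) (le_add_of_nonneg_right (by positivity))).trans hmT)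
            g hg hg0 x hx) (by positivity) (Real.exp_pos _).le
      _ ≤ Real.exp (-V x / 2) * P :=
          exp_mul_kernelOperator_heatKernel_le_exp_mul_iterate_jumpOperator K.2 ht hVb hG
            (abs_sub_sub_inner_gradient_le hV hK) (by rintro rfl; norm_num at hm) hg hg0 x
  have hP : 0 ≤ P := nonneg_of_mul_nonneg_right (hflux.trans' (by positivity)) (Real.exp_pos _)
  calc _ = Real.exp (-(M / 2)) *
        (Real.exp (-(A * (1 + T))) * (h * ∫ y, g y ∂gibbsMeasure b V)) := by ring
    _ ≤ Real.exp (-(M / 2)) * (Real.exp (-V x / 2) * P) := by gcongr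
    _ = Real.exp (-(M / 2) + -V x / 2) * P := by rw [Real.exp_add, mul_assoc]
    _ ≤ P := mul_le_of_le_one_left hP
        (Real.exp_le_one_iff.2 (by linarith [neg_le_of_abs_le (hM x)]))

end Gibbs

/-! ### Geometric ergodicity -/

/-- Blocks of `m` steps contract the radius by `r`; the remaining `k % m` steps do not expand it. -/
lemma mapsTo_iterate_pow_div_mul {X : Type*} {P : X → X} {S : ℝ → Set X} {r : ℝ} {m : ℕ}
    (hstep : ∀ B, Set.MapsTo P (S B) (S B)) (hblock : ∀ B, Set.MapsTo P^[m] (S B) (S (r * B)))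
    (k : ℕ) (B : ℝ) : Set.MapsTo P^[k] (S B) (S (r ^ (k / m) * B)) := by
  have hblocks : ∀ j, Set.MapsTo P^[m * j] (S B) (S (r ^ j * B)) := fun j => by
    induction j with
    | zero => simpa using Set.mapsTo_id (S B)
    | succ j ih =>
      rw [mul_add_one, add_comm, Function.iterate_add, pow_succ', mul_assoc]
      exact (hblock _).comp ih
  rw [← Nat.mod_add_div k m, Function.iterate_add, Nat.mod_add_div]
  exact ((hstep _).iterate _).comp (hblocks _)

lemma exp_neg_pow_div_le {a t T : ℝ} (ha : 0 ≤ a) (ht : 0 ≤ t) (hT : 0 < T) {m : ℕ} (hm : 0 < m)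
    (hmT : m * t ≤ T) (k : ℕ) :
    Real.exp (-a) ^ (k / m) ≤ Real.exp a * Real.exp (-(a / T) * k * t) := by
  have hk : (k : ℝ) ≤ m * (↑(k / m) + 1) := by exact_mod_cast (Nat.lt_mul_div_succ k hm).le
  have hrate : a / T * k * t ≤ a * (↑(k / m) + 1) :=
    calc a / T * k * t ≤ a / T * (m * (↑(k / m) + 1)) * t := by gcongr
      _ = a / T * (m * t) * (↑(k / m) + 1) := by ring
      _ ≤ a / T * T * (↑(k / m) + 1) := by gcongr
      _ = a * (↑(k / m) + 1) := by rw [div_mul_cancel₀ _ hT.ne']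
  rw [← Real.exp_nat_mul, ← Real.exp_add, Real.exp_le_exp]
  linarith

lemma exists_nat_mul_mem_Icc {t : ℝ} (ht : 0 < t) : ∃ m : ℕ, 1 ≤ m * t ∧ m * t ≤ 1 + t := by
  refine ⟨⌈1 / t⌉₊, (div_le_iff₀ ht).1 (Nat.le_ceil _), ?_⟩
  calc _ ≤ (1 / t + 1) * t := by
        gcongr
        exact (Nat.ceil_lt_add_one (by positivity)).le
    _ = 1 + t := by field_simp

section Ergodicity

variable {ι E : Type*} [NormedAddCommGroup E] [InnerProductSpace ℝ E] [FiniteDimensional ℝ E]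
  [MeasurableSpace E] [BorelSpace E] {b : Module.Basis ι ℝ E} {V : E → ℝ}

/-- The ball of radius `B` among the measurable functions on the torus that have mean zero for the
Gibbs measure, in the supremum norm; the torus functions are represented by their lifts to `E`. -/
def centredBall (b : Module.Basis ι ℝ E) (V : E → ℝ) (B : ℝ) : Set (E → ℝ) :=
  {f | Measurable f ∧ LatticePeriodic b f ∧ (∀ x, |f x| ≤ B) ∧ ∫ x, f x ∂gibbsMeasure b V = 0}

variable [Finite ι]

lemma mapsTo_jumpOperator_centredBall {t : ℝ} (ht : 0 < t) (hV : BoundedMeasurable V)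
    (hper : LatticePeriodic b V) (B : ℝ) :
    Set.MapsTo (jumpOperator volume (malaKernel V t)) (centredBall b V B) (centredBall b V B) := by
  rintro f ⟨hf, hfper, hfB, hf0⟩
  have hk := isSubMarkovDensity_malaKernel hV.measurable ht
  have hfb : BoundedMeasurable f := ⟨hf, B, hfB⟩
  exact ⟨(hk.boundedMeasurable_jumpOperator hfb).measurable,
    hfper.jumpOperator (malaKernel_add hper t), hk.abs_jumpOperator_le hf hfB,
    (integral_gibbsMeasure_jumpOperator_malaKernel ht hV hper hfb hfper).trans hf0⟩

lemma mapsTo_iterate_jumpOperator_centredBall {t : ℝ} (ht : 0 < t) (hV : BoundedMeasurable V)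
    (hper : LatticePeriodic b V) {α : ℝ} {m : ℕ}
    (hmin : ∀ g, BoundedMeasurable g → (∀ y, 0 ≤ g y) → ∀ x ∈ ZSpan.fundamentalDomain b,
      α * ∫ y, g y ∂gibbsMeasure b V ≤ (jumpOperator volume (malaKernel V t))^[m] g x) (B : ℝ) :
    Set.MapsTo (jumpOperator volume (malaKernel V t))^[m] (centredBall b V B)
      (centredBall b V (Real.exp (-α) * B)) := by
  have := Fintype.ofFinite ι
  have := isProbabilityMeasure_gibbsMeasure b hV
  intro f hfS
  obtain ⟨hPf, hPper, -, hP0⟩ := (mapsTo_jumpOperator_centredBall ht hV hper B).iterate m hfS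
  obtain ⟨hf, -, hfB, hf0⟩ := hfS
  have hB : 0 ≤ B := (abs_nonneg _).trans (hfB 0)
  refine ⟨hPf, hPper, fun x => ?_, hP0⟩
  rw [← hPper.apply_fract x]
  calc _ ≤ (1 - α) * B := abs_iterate_jumpOperator_le_of_minorization
        (fun g hg hg0 =>
          hmin g hg hg0 _ (ZSpan.fract_mem_fundamentalDomain b x)) hf hfB hf0
    _ ≤ Real.exp (-α) * B := mul_le_mul_of_nonneg_right (Real.one_sub_le_exp_neg α) hB

theorem stmt5_general (b : Module.Basis ι ℝ E) (hV : Differentiable ℝ V) {K : NNReal}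
    (hK : LipschitzWith K (gradient V)) (hper : LatticePeriodic b V) {T : ℝ} (hT : 0 < T) :
    ∃ C > (0 : ℝ), ∃ lam > (0 : ℝ), ∀ t : ℝ, 0 < t → t ≤ T →
      ∀ (k : ℕ) (f : E → ℝ), Measurable f → LatticePeriodic b f →
        ∫ x, f x ∂gibbsMeasure b V = 0 →
        ∀ B : ℝ, (∀ x, |f x| ≤ B) →
          ∀ x, |(jumpOperator volume (malaKernel V t))^[k] f x| ≤
            C * Real.exp (-lam * k * t) * B := by
  obtain ⟨M, hM⟩ := hper.exists_norm_le hV.continuous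
  have hVb : BoundedMeasurable V := ⟨hV.continuous.measurable, M, hM⟩
  obtain ⟨α, hα, hmin⟩ := exists_mul_integral_gibbsMeasure_le_iterate_jumpOperator hV hK hper hT
  refine ⟨Real.exp α, Real.exp_pos α, α / (1 + T), by positivity,
    fun t ht htT k f hf hfper hf0 B hfB x => ?_⟩
  obtain ⟨m, hm, hmt⟩ := exists_nat_mul_mem_Icc ht
  have hmT : m * t ≤ 1 + T := hmt.trans (by gcongr)
  have hm0 : 0 < m := Nat.pos_of_ne_zero (by rintro rfl; norm_num at hm)
  have hblock := mapsTo_iterate_jumpOperator_centredBall ht hVb hper (hmin t ht htT m hm hmT)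
  have hmem := mapsTo_iterate_pow_div_mul (mapsTo_jumpOperator_centredBall ht hVb hper) hblock k B
    ⟨hf, hfper, hfB, hf0⟩
  exact (hmem.2.2.1 x).trans (mul_le_mul_of_nonneg_right
    (exp_neg_pow_div_le hα.le ht.le (by positivity) hm0 hmT k) ((abs_nonneg _).trans (hfB x)))

end Ergodicity

/-! ### Coordinatewise periodicity -/

section Coordinates

variable {n : ℕ} {L : ℝ}

/-- The basis `L e₁, …, L eₙ` of `ℝⁿ`, which spans the period lattice of the torus. -/
def coordLatticeBasis (n : ℕ) (hL : L ≠ 0) : Module.Basis (Fin n) ℝ (En n) :=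
  (EuclideanSpace.basisFun (Fin n) ℝ).toBasis.unitsSMul fun _ => Units.mk0 L hL

lemma coordLatticeBasis_apply (hL : L ≠ 0) (i : Fin n) :
    coordLatticeBasis n hL i = L • EuclideanSpace.single i (1 : ℝ) := by
  simp [coordLatticeBasis, Module.Basis.unitsSMul_apply, Units.smul_def]

lemma latticePeriodic_coordLatticeBasis_iff (hL : L ≠ 0) {f : En n → ℝ} :
    LatticePeriodic (coordLatticeBasis n hL) f ↔
      ∀ (q : En n) (i : Fin n), f (q + L • EuclideanSpace.single i (1 : ℝ)) = f q := by
  simp only [LatticePeriodic, Function.Periodic, coordLatticeBasis_apply]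
  exact forall_comm

lemma fundamentalDomain_coordLatticeBasis (hL : 0 < L) :
    ZSpan.fundamentalDomain (coordLatticeBasis n hL.ne') = Box n L := by
  ext q
  simp only [Box, Set.mem_ofPred_eq, ZSpan.mem_fundamentalDomain, coordLatticeBasis,
    Module.Basis.repr_unitsSMul, Set.mem_Ico, Units.smul_def, smul_eq_mul,
    Units.val_inv_eq_inv_val, Units.val_mk0, inv_mul_eq_div, le_div_iff₀ hL, div_lt_iff₀ hL,
    zero_mul, one_mul, OrthonormalBasis.coe_toBasis_repr_apply, EuclideanSpace.basisFun_repr]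

lemma integral_gibbsMeasure_coordLatticeBasis (hL : 0 < L) (V f : En n → ℝ) :
    ∫ q, f q ∂gibbsMeasure (coordLatticeBasis n hL.ne') V = muInt V L f := by
  rw [integral_gibbsMeasure, fundamentalDomain_coordLatticeBasis hL]
  simp only [muInt, mul_comm (Real.exp _)]

lemma langevinProposal_eq_Tker (V : En n → ℝ) (dt : ℝ) : langevinProposal V dt = Tker V dt := by
  ext q q'
  rw [langevinProposal, heatKernel, Tker, finrank_euclideanSpace_fin, sub_sub_eq_add_sub,
    add_sub_right_comm]

lemma jumpOperator_malaKernel_eq_Pmala (V : En n → ℝ) (dt : ℝ) :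
    jumpOperator volume (malaKernel V dt) = Pmala V dt := by
  rw [malaKernel, langevinProposal_eq_Tker]
  rfl

end Coordinates

theorem stmt5 (n : ℕ) (hn : 1 ≤ n) (L : ℝ) (hL : 0 < L)
    (V : En n → ℝ) (hV : ContDiff ℝ (⊤ : ℕ∞) V)
    (hper : ∀ (q : En n) (i : Fin n), V (q + L • EuclideanSpace.single i (1 : ℝ)) = V q) :
    ∃ dts > (0 : ℝ), ∃ C > (0 : ℝ), ∃ lam > (0 : ℝ), ∀ dt : ℝ, 0 < dt → dt ≤ dts →
      ∀ (k : ℕ) (f : En n → ℝ), Measurable f →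
        (∀ (q : En n) (i : Fin n), f (q + L • EuclideanSpace.single i (1 : ℝ)) = f q) →
        muInt V L f = 0 →
        ∀ B : ℝ, (∀ q, |f q| ≤ B) →
          ∀ q, |(Pmala V dt)^[k] f q| ≤ C * Real.exp (-lam * k * dt) * B := by
  rw [← latticePeriodic_coordLatticeBasis_iff hL.ne'] at hper
  obtain ⟨K, hK⟩ := hper.exists_lipschitzWith_gradient (hV.of_le (by norm_cast))
  have h := stmt5_general _ (hV.differentiable (by simp)) hK hper one_pos
  simp only [latticePeriodic_coordLatticeBasis_iff, integral_gibbsMeasure_coordLatticeBasis hL,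
    jumpOperator_malaKernel_eq_Pmala] at h
  exact ⟨1, one_pos, h⟩
end
end
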